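/- For every integer n ≥ 12, log p(n+1) - log p(n) < log(1 + (√6·π/6)/(n+1)^(1/2)), where p is the partition function. -/

import Mathlib

/-!
Cauchy's formula writes `p(n)` as an integral of `∏ (1 - qᵏ)⁻¹` over the circle `|q| = exp (-α)`.
Near `q = 1` the modular transformation of the Euler product replaces the integrand, up to a
negligible factor, by a Bessel kernel with an almost elementary primitive; away from `q = 1` the
product is small compared with its value at `q = exp (-α)`. With `x = √(π² / 6 (n - 1 / 24))` and
`α = π² / (6 x)` this locates `p(n)` within a relative error `1 / (20 x²)` of the leading term of
the Hardy-Ramanujan-Rademacher formula, which decides the inequality for `n ≥ 1000`.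

For `n < 1000` the values of `p` are computed exactly. By the pentagonal number theorem the
generating function of `p` is the inverse of a sparse series, so modulo `b ^ 1001` the integer
`∑ p(k) bᵏ` is an inverse of an explicit integer, which Newton iteration finds; for `b = 2 ^ 128`
its digits are the numbers `p(k)`.
-/

/-- The partition number `p(n)`. -/
abbrev partitionCount (n : ℕ) : ℕ := Fintype.card n.Partition

section GeneratingFunction

open Filter Finset PowerSeries Topology

theorem hasSum_coeff_mul {𝕜 : Type*} [RCLike 𝕜] {f g : 𝕜⟦X⟧} {q a b : 𝕜}
    (hf : HasSum (fun n ↦ coeff n f * q ^ n) a) (hg : HasSum (fun n ↦ coeff n g * q ^ n) b) :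
    HasSum (fun n ↦ coeff n (f * g) * q ^ n) (a * b) := by
  have hf_norm := summable_norm_iff.mpr hf.summable
  have hg_norm := summable_norm_iff.mpr hg.summable
  have coeff_mul_pow (n : ℕ) : coeff n (f * g) * q ^ n =
      ∑ kl ∈ antidiagonal n, (coeff kl.1 f * q ^ kl.1) * (coeff kl.2 g * q ^ kl.2) := by
    rw [coeff_mul, sum_mul]
    refine sum_congr rfl fun kl hkl ↦ ?_
    rw [← mem_antidiagonal.mp hkl, pow_add]
    ring
  simp_rw [coeff_mul_pow]
  rw [← hf.tsum_eq, ← hg.tsum_eq,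
    tsum_mul_tsum_eq_tsum_sum_antidiagonal_of_summable_norm hf_norm hg_norm]
  exact (summable_norm_sum_mul_antidiagonal_of_summable_norm hf_norm hg_norm).of_norm.hasSum

theorem hasSum_coeff_prod {𝕜 ι : Type*} [RCLike 𝕜] {f : ι → 𝕜⟦X⟧} {q : 𝕜} {a : ι → 𝕜}
    (s : Finset ι) (h : ∀ i ∈ s, HasSum (fun n ↦ coeff n (f i) * q ^ n) (a i)) :
    HasSum (fun n ↦ coeff n (∏ i ∈ s, f i) * q ^ n) (∏ i ∈ s, a i) := by
  classical
  induction s using Finset.induction_on with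
  | empty =>
    rw [prod_empty, prod_empty]
    convert hasSum_ite_eq 0 (1 : 𝕜) using 2 with n
    rcases eq_or_ne n 0 with rfl | hn
    · simp
    · simp [coeff_one, hn]
  | insert i s hi ih =>
    rw [prod_insert hi, prod_insert hi]
    exact hasSum_coeff_mul (h i (mem_insert_self i s)) (ih fun j hj ↦ h j (mem_insert_of_mem hj))

theorem mk_dvd_mul_one_sub_X_pow (R : Type*) [CommRing R] {k : ℕ} (hk : 0 < k) :
    (PowerSeries.mk fun n ↦ if k ∣ n then (1 : R) else 0) * (1 - X ^ k) = 1 := by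
  ext n
  rw [mul_sub, mul_one, map_sub, coeff_mul_X_pow', coeff_mk, coeff_one]
  rcases le_or_gt k n with hkn | hnk
  · obtain ⟨d, rfl⟩ := Nat.exists_eq_add_of_le hkn
    simp [hk.ne']
  · have dvd_iff : k ∣ n ↔ n = 0 := ⟨(Nat.eq_zero_of_dvd_of_lt · hnk), by simp +contextual⟩
    simp [hnk.not_ge, dvd_iff]

theorem hasSum_coeff_mk_dvd {𝕜 : Type*} [NormedField 𝕜] {k : ℕ} (hk : 0 < k) {q : 𝕜}
    (hq : ‖q‖ < 1) :
    HasSum (fun n ↦ coeff n (PowerSeries.mk fun n ↦ if k ∣ n then (1 : 𝕜) else 0) * q ^ n)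
      (1 - q ^ k)⁻¹ := by
  have hqk : ‖q ^ k‖ < 1 := by
    rw [norm_pow]
    exact pow_lt_one₀ (norm_nonneg q) hq hk.ne'
  refine (Function.Injective.hasSum_iff (mul_right_injective₀ hk.ne') fun n hn ↦ ?_).mp ?_
  · have : ¬ k ∣ n := fun ⟨j, hj⟩ ↦ hn ⟨j, hj.symm⟩
    simp [this]
  · simpa [Function.comp_def, pow_mul] using hasSum_geometric_of_norm_lt_one hqk

open PowerSeries.WithPiTopology in
theorem mk_card_restricted_le_eq_prod (R : Type*) [CommRing R] (m : ℕ) :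
    (PowerSeries.mk fun n ↦ ((Nat.Partition.restricted n (· ≤ m)).card : R)) =
      ∏ i ∈ range m, PowerSeries.mk fun n ↦ if i + 1 ∣ n then (1 : R) else 0 := by
  let : TopologicalSpace R := ⊥
  have : DiscreteTopology R := ⟨rfl⟩
  have factor_eq (i : ℕ) : ∑' j : ℕ, (X : R⟦X⟧) ^ ((i + 1) * j) =
      PowerSeries.mk fun n ↦ if i + 1 ∣ n then (1 : R) else 0 := by
    simp_rw [pow_mul]
    refine left_inv_eq_right_inv (tsum_pow_mul_one_sub_of_constantCoeff_eq_zero (by simp)) ?_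
    rw [mul_comm, mk_dvd_mul_one_sub_X_pow R i.succ_pos]
  have hprod := Nat.Partition.hasProd_powerSeriesMk_card_restricted R (· ≤ m)
  simp only [factor_eq] at hprod
  refine (hprod.unique (hasProd_prod_of_ne_finset_one (s := range m) (L := .unconditional _)
    fun i hi ↦ if_neg ?_)).trans (prod_congr rfl fun i hi ↦ if_pos ?_)
  · simpa [Nat.succ_le_iff] using hi
  · exact Nat.succ_le_iff.mpr (mem_range.mp hi)

theorem hasSum_card_restricted_le {𝕜 : Type*} [RCLike 𝕜] (m : ℕ) {q : 𝕜} (hq : ‖q‖ < 1) :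
    HasSum (fun n ↦ ((Nat.Partition.restricted n (· ≤ m)).card : 𝕜) * q ^ n)
      (∏ i ∈ range m, (1 - q ^ (i + 1)))⁻¹ := by
  rw [← prod_inv_distrib]
  simpa only [← mk_card_restricted_le_eq_prod, coeff_mk] using
    hasSum_coeff_prod (range m) fun i _ ↦ hasSum_coeff_mk_dvd i.succ_pos hq

theorem card_restricted_le_eq_partitionCount {m n : ℕ} (h : n ≤ m) :
    (Nat.Partition.restricted n (· ≤ m)).card = partitionCount n := by
  rw [Nat.Partition.restricted, filter_true_of_mem, card_univ]
  exact fun _ _ i hi ↦ (Nat.Partition.le_of_mem_parts hi).trans h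

/-- Euler's function `φ(q) = ∏ (1 - qᵏ)`, over `k ≥ 1`, whose inverse generates the partition
numbers. -/
noncomputable def eulerFunction (q : ℂ) : ℂ := ∏' n : ℕ, (1 - q ^ (n + 1))

theorem tendsto_prod_eulerFunction {q : ℂ} (hq : ‖q‖ < 1) :
    Tendsto (fun m ↦ ∏ i ∈ range m, (1 - q ^ (i + 1))) atTop (𝓝 (eulerFunction q)) :=
  (ModularForm.multipliable_one_sub_pow hq).hasProd.tendsto_prod_nat

theorem eulerFunction_ne_zero {q : ℂ} (hq : ‖q‖ < 1) : eulerFunction q ≠ 0 := by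
  simp only [eulerFunction, sub_eq_add_neg]
  refine tprod_one_add_ne_zero_of_summable (fun n h ↦ ?_) ?_
  · have hpow : q ^ (n + 1) = 1 := by linear_combination -h
    have hlt : ‖q‖ ^ (n + 1) < 1 := pow_lt_one₀ (norm_nonneg q) hq n.succ_ne_zero
    simp [← norm_pow, hpow] at hlt
  · simpa using (summable_nat_add_iff 1).mpr (summable_geometric_of_lt_one (norm_nonneg q) hq)

theorem tendsto_prod_eulerFunction_inv {q : ℂ} (hq : ‖q‖ < 1) :
    Tendsto (fun m ↦ (∏ i ∈ range m, (1 - q ^ (i + 1)))⁻¹) atTop (𝓝 (eulerFunction q)⁻¹) :=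
  (tendsto_prod_eulerFunction hq).inv₀ (eulerFunction_ne_zero hq)

theorem summable_partitionCount_mul_pow {r : ℝ} (hr0 : 0 ≤ r) (hr1 : r < 1) :
    Summable fun n ↦ (partitionCount n : ℝ) * r ^ n := by
  have hr : ‖r‖ < 1 := by rwa [Real.norm_of_nonneg hr0]
  have hrC : ‖(r : ℂ)‖ < 1 := by rwa [Complex.norm_real]
  obtain ⟨C, hC⟩ := (tendsto_prod_eulerFunction_inv hrC).norm.bddAbove_range
  refine summable_of_sum_range_le (c := C) (fun n ↦ by positivity) fun m ↦ ?_
  calc ∑ n ∈ range m, (partitionCount n : ℝ) * r ^ n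
      = ∑ n ∈ range m, ((Nat.Partition.restricted n (· ≤ m)).card : ℝ) * r ^ n :=
        sum_congr rfl fun n hn ↦ by
          rw [card_restricted_le_eq_partitionCount (mem_range.mp hn).le]
    _ ≤ (∏ i ∈ range m, (1 - r ^ (i + 1)))⁻¹ :=
        sum_le_hasSum _ (fun n _ ↦ by positivity) (hasSum_card_restricted_le m hr)
    _ ≤ ‖(∏ i ∈ range m, (1 - (r : ℂ) ^ (i + 1)))⁻¹‖ := by
        refine (le_abs_self _).trans_eq ?_
        rw [← Real.norm_eq_abs, ← Complex.norm_real]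
        push_cast
        rfl
    _ ≤ C := hC ⟨m, rfl⟩

theorem hasSum_partitionCount_mul_pow {q : ℂ} (hq : ‖q‖ < 1) :
    HasSum (fun n ↦ (partitionCount n : ℂ) * q ^ n) (eulerFunction q)⁻¹ := by
  have hbound := summable_partitionCount_mul_pow (norm_nonneg q) hq
  have hsum : Summable fun n ↦ (partitionCount n : ℂ) * q ^ n := .of_norm (by simpa using hbound)
  have hlim : Tendsto (fun m ↦ ∑' n, ((Nat.Partition.restricted n (· ≤ m)).card : ℂ) * q ^ n)
      atTop (𝓝 (∑' n, (partitionCount n : ℂ) * q ^ n)) := by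
    refine tendsto_tsum_of_dominated_convergence hbound (fun n ↦ ?_) (.of_forall fun m n ↦ ?_)
    · refine tendsto_const_nhds.congr' ?_
      filter_upwards [eventually_ge_atTop n] with m hm
      rw [card_restricted_le_eq_partitionCount hm]
    · rw [norm_mul, norm_pow, Complex.norm_natCast]
      gcongr
      exact card_le_univ _
  simp_rw [(hasSum_card_restricted_le _ hq).tsum_eq] at hlim
  rw [← tendsto_nhds_unique hlim (tendsto_prod_eulerFunction_inv hq)]
  exact hsum.hasSum

theorem partitionCount_le_two_pow (n : ℕ) : partitionCount n ≤ 2 ^ (n - 1) :=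
  (Fintype.card_le_of_surjective _ Nat.Partition.ofComposition_surj).trans_eq (composition_card n)

theorem norm_eulerFunction_inv_sub_one_le {q : ℂ} (hq : ‖q‖ ≤ 1 / 4) :
    ‖(eulerFunction q)⁻¹ - 1‖ ≤ 2 * ‖q‖ := by
  have htail : HasSum (fun n ↦ (partitionCount (n + 1) : ℂ) * q ^ (n + 1))
      ((eulerFunction q)⁻¹ - 1) := by
    simpa using (hasSum_nat_add_iff' 1).mpr (hasSum_partitionCount_mul_pow (q := q) (by linarith))
  have hgeom := (hasSum_geometric_of_lt_one (r := 2 * ‖q‖) (by positivity)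
    (by linarith)).mul_left ‖q‖
  have hterm (n : ℕ) : ‖(partitionCount (n + 1) : ℂ) * q ^ (n + 1)‖ ≤ ‖q‖ * (2 * ‖q‖) ^ n := by
    have hp : (partitionCount (n + 1) : ℝ) ≤ 2 ^ n := mod_cast partitionCount_le_two_pow (n + 1)
    calc ‖(partitionCount (n + 1) : ℂ) * q ^ (n + 1)‖ = partitionCount (n + 1) * ‖q‖ ^ (n + 1) := by
          rw [norm_mul, norm_pow, Complex.norm_natCast]
      _ ≤ 2 ^ n * ‖q‖ ^ (n + 1) := by gcongr
      _ = ‖q‖ * (2 * ‖q‖) ^ n := by ring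
  calc ‖(eulerFunction q)⁻¹ - 1‖ ≤ ‖q‖ * (1 - 2 * ‖q‖)⁻¹ := by
        simpa only [htail.tsum_eq] using tsum_of_norm_bounded hgeom hterm
    _ ≤ ‖q‖ * 2 := by
        gcongr
        rw [inv_le_comm₀ (by linarith) two_pos]
        linarith
    _ = 2 * ‖q‖ := mul_comm _ _

end GeneratingFunction

section CauchyFormula

open Complex Real MeasureTheory

theorem integral_cexp_int_mul_period {α : ℝ} (hα : 0 < α) (k : ℤ) :
    ∫ y in (-(π / α))..(π / α), cexp (k * α * I * y) = if k = 0 then 2 * (π : ℂ) / α else 0 := by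
  have hα' : (α : ℂ) ≠ 0 := ofReal_ne_zero.mpr hα.ne'
  split_ifs with hk
  · simp only [hk, Int.cast_zero, zero_mul, Complex.exp_zero, intervalIntegral.integral_const,
      sub_neg_eq_add, real_smul, ofReal_add, ofReal_div, mul_one]
    ring
  · have hc : (k : ℂ) * α * I ≠ 0 :=
      mul_ne_zero (mul_ne_zero (Int.cast_ne_zero.mpr hk) hα') I_ne_zero
    have hperiod : cexp (k * α * I * ((π / α : ℝ) : ℂ)) =
        cexp (k * α * I * ((-(π / α) : ℝ) : ℂ)) := by
      rw [Complex.exp_eq_exp_iff_exists_int]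
      refine ⟨k, ?_⟩
      push_cast
      field_simp
      ring
    rw [integral_exp_mul_complex hc, hperiod, sub_self, zero_div]

theorem norm_cexp_neg_mul_one_add_I (α y : ℝ) :
    ‖cexp (-(α * (1 + y * I)))‖ = Real.exp (-α) := by
  simp [Complex.norm_exp]

theorem coeff_eq_integral_of_hasSum {a : ℕ → ℂ} {f : ℂ → ℂ} {α : ℝ} (hα : 0 < α)
    (ha : Summable fun k ↦ ‖a k‖ * Real.exp (-α) ^ k)
    (hf : ∀ q, ‖q‖ = Real.exp (-α) → HasSum (fun k ↦ a k * q ^ k) (f q)) (n : ℕ) :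
    a n = α / (2 * π) * ∫ y in (-(π / α))..(π / α),
      f (cexp (-(α * (1 + y * I)))) * cexp (n * (α * (1 + y * I))) := by
  have hα' : (α : ℂ) ≠ 0 := ofReal_ne_zero.mpr hα.ne'
  have hint : HasSum (fun k ↦ ∫ y in (-(π / α))..(π / α),
      a k * cexp (-(α * (1 + y * I))) ^ k * cexp (n * (α * (1 + y * I))))
      (∫ y in (-(π / α))..(π / α),
        f (cexp (-(α * (1 + y * I)))) * cexp (n * (α * (1 + y * I)))) := by
    refine intervalIntegral.hasSum_integral_of_dominated_convergence
      (fun k _ ↦ ‖a k‖ * Real.exp (-α) ^ k * Real.exp (n * α))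
      (fun k ↦ Continuous.aestronglyMeasurable (by fun_prop))
      (fun k ↦ .of_forall fun y _ ↦ ?_) (.of_forall fun y _ ↦ ha.mul_right _) (by simp)
      (.of_forall fun y _ ↦ (hf _ (norm_cexp_neg_mul_one_add_I α y)).mul_right _)
    rw [norm_mul, norm_mul, norm_pow, norm_cexp_neg_mul_one_add_I, Complex.norm_exp]
    simp
  have hterm (k : ℕ) : ∫ y in (-(π / α))..(π / α),
      a k * cexp (-(α * (1 + y * I))) ^ k * cexp (n * (α * (1 + y * I))) =
        if k = n then a n * (2 * π / α) else 0 := by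
    have hsplit (y : ℝ) : a k * cexp (-(α * (1 + y * I))) ^ k * cexp (n * (α * (1 + y * I))) =
        a k * cexp ((n - k) * α) * cexp (((n - k : ℤ) : ℂ) * α * I * y) := by
      rw [← Complex.exp_nat_mul, mul_assoc, mul_assoc, ← Complex.exp_add, ← Complex.exp_add]
      push_cast
      ring_nf
    simp_rw [hsplit]
    rw [intervalIntegral.integral_const_mul, integral_cexp_int_mul_period hα]
    rcases eq_or_ne k n with rfl | hk
    · simp
    · rw [if_neg hk, if_neg (by omega), mul_zero]
  simp_rw [hterm] at hint
  rw [hint.unique (hasSum_ite_eq n _)]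
  field_simp

theorem partitionCount_eq_integral (n : ℕ) {α : ℝ} (hα : 0 < α) :
    (partitionCount n : ℂ) = α / (2 * π) * ∫ y in (-(π / α))..(π / α),
      (eulerFunction (cexp (-(α * (1 + y * I)))))⁻¹ * cexp (n * (α * (1 + y * I))) := by
  have hr : Real.exp (-α) < 1 := Real.exp_lt_one_iff.mpr (by linarith)
  refine coeff_eq_integral_of_hasSum (a := fun k ↦ (partitionCount k : ℂ))
    (f := fun q ↦ (eulerFunction q)⁻¹) hα ?_
    (fun q hq ↦ hasSum_partitionCount_mul_pow (by rwa [hq])) n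
  simpa using summable_partitionCount_mul_pow (Real.exp_pos (-α)).le hr

end CauchyFormula

section ModularTransformation

open Complex Real

theorem sqrt_I_mul_of_re_pos {z : ℂ} (hz : 0 < z.re) :
    Complex.sqrt (I * z) = Complex.sqrt I * Complex.sqrt z := by
  have harg := abs_lt.mp (Complex.abs_arg_lt_pi_div_two_iff.mpr (Or.inl hz))
  have hlog : Complex.log (I * z) = Complex.log I + Complex.log z := by
    rw [Complex.log_mul_eq_add_log_iff I_ne_zero (ne_zero_of_re_pos hz), Complex.arg_I]
    constructor <;> linarith [harg.1, harg.2]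
  rw [sqrt_eq_exp (mul_ne_zero I_ne_zero (ne_zero_of_re_pos hz)), sqrt_eq_exp I_ne_zero,
    sqrt_eq_exp (ne_zero_of_re_pos hz), hlog, ← Complex.exp_add, add_div]

theorem eta_eq_cexp_mul_eulerFunction {τ z : ℂ} (h : 2 * π * I * τ = -z) :
    ModularForm.eta τ = cexp (-(z / 24)) * eulerFunction (cexp (-z)) := by
  simp only [ModularForm.eta, eulerFunction, ModularForm.eta_q_eq_pow, h, Function.Periodic.qParam]
  push_cast
  rw [neg_div]

theorem norm_cexp_neg_lt_one {z : ℂ} (hz : 0 < z.re) : ‖cexp (-z)‖ < 1 := by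
  rw [Complex.norm_exp, Real.exp_lt_one_iff, neg_re]
  linarith

theorem eulerFunction_cexp_neg_inv {z : ℂ} (hz : 0 < z.re) :
    (eulerFunction (cexp (-z)))⁻¹ = Complex.sqrt (z / (2 * π)) * cexp (π ^ 2 / 6 / z - z / 24) *
      (eulerFunction (cexp (-(4 * π ^ 2 / z))))⁻¹ := by
  have hz0 : z ≠ 0 := ne_zero_of_re_pos hz
  have hπ : (π : ℂ) ≠ 0 := ofReal_ne_zero.mpr pi_ne_zero
  have hz' : 0 < (z / (2 * π)).re := by
    rw [show z / (2 * π) = ((2 * π)⁻¹ : ℝ) * z by push_cast; field_simp, re_ofReal_mul]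
    positivity
  have hzinv : 0 < (4 * π ^ 2 / z).re := by
    rw [show 4 * π ^ 2 / z = ((4 * π ^ 2 : ℝ) : ℂ) * z⁻¹ by push_cast; rfl, re_ofReal_mul, inv_re]
    have := normSq_pos.mpr hz0
    positivity
  have htransform : ModularForm.eta (-1 / (I * (z / (2 * π)))) = (Complex.sqrt I)⁻¹ *
      (Complex.sqrt (I * (z / (2 * π))) * ModularForm.eta (I * (z / (2 * π)))) :=
    ModularForm.eta_comp_eq_csqrt_I_inv (x := I * (z / (2 * π))) (by simpa using hz')
  have hsqrtI : Complex.sqrt I ≠ 0 := by simp [Complex.sqrt]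
  rw [sqrt_I_mul_of_re_pos hz',
    eta_eq_cexp_mul_eulerFunction (show 2 * π * I * (I * (z / (2 * π))) = -z by
      field_simp; rw [I_sq]),
    eta_eq_cexp_mul_eulerFunction (show 2 * π * I * (-1 / (I * (z / (2 * π)))) = -(4 * π ^ 2 / z) by
      field_simp; norm_num)] at htransform
  have hq := eulerFunction_ne_zero (norm_cexp_neg_lt_one hz)
  have hqinv := eulerFunction_ne_zero (norm_cexp_neg_lt_one hzinv)
  have hexp := Complex.exp_ne_zero (-(4 * π ^ 2 / z / 24))
  rw [show π ^ 2 / 6 / z - z / 24 = -(z / 24) - -(4 * π ^ 2 / z / 24) by ring, Complex.exp_sub]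
  generalize eulerFunction (cexp (-z)) = E at *
  generalize eulerFunction (cexp (-(4 * π ^ 2 / z))) = E' at *
  generalize cexp (-(4 * π ^ 2 / z / 24)) = v at *
  field_simp at htransform ⊢
  linear_combination htransform

end ModularTransformation

section MinorArcs

open Filter Finset Topology

theorem norm_one_sub_ofReal {r : ℝ} (hr : r ≤ 1) : ‖1 - (r : ℂ)‖ = 1 - r := by
  rw [← Complex.ofReal_one, ← Complex.ofReal_sub, Complex.norm_of_nonneg (sub_nonneg.mpr hr)]

theorem neg_log_norm_one_sub_le {w : ℂ} (hw : ‖w‖ < 1) :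
    -Real.log ‖1 - w‖ ≤ w.re - ‖w‖ - Real.log (1 - ‖w‖) := by
  have hlog : HasSum (fun n : ℕ ↦ (w ^ (n + 1) / (n + 1)).re) (-Real.log ‖1 - w‖) := by
    simpa [Complex.log_re] using Complex.reCLM.hasSum (Complex.hasSum_taylorSeries_neg_log' hw)
  have hlog_norm : HasSum (fun n : ℕ ↦ ‖w‖ ^ (n + 1) / (n + 1)) (-Real.log (1 - ‖w‖)) :=
    Real.hasSum_pow_div_log_of_abs_lt_one (by rwa [abs_norm])
  have hterm (n : ℕ) : (w ^ (n + 1) / (n + 1)).re ≤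
      ‖w‖ ^ (n + 1) / (n + 1) + if n = 0 then w.re - ‖w‖ else 0 := by
    split_ifs with hn
    · simp [hn]
    · rw [add_zero, ← norm_pow, ← Nat.cast_succ, Complex.div_natCast_re, Nat.cast_succ]
      gcongr
      exact Complex.re_le_norm _
  linarith [hasSum_le hterm hlog (hlog_norm.add (hasSum_ite_eq 0 (w.re - ‖w‖)))]

theorem norm_inv_one_sub_le {w : ℂ} (hw : ‖w‖ < 1) :
    ‖(1 - w)⁻¹‖ ≤ Real.exp (w.re - ‖w‖) * (1 - ‖w‖)⁻¹ := by
  have hne : 0 < ‖1 - w‖ := norm_pos_iff.mpr fun h ↦ by simp [← sub_eq_zero.mp h] at hw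
  have hlog := Real.exp_le_exp.mpr (neg_log_norm_one_sub_le hw)
  rwa [Real.exp_neg, Real.exp_log hne, Real.exp_sub, Real.exp_log (sub_pos.mpr hw), div_eq_mul_inv,
    ← norm_inv] at hlog

theorem norm_eulerFunction_inv_le {q : ℂ} (hq : ‖q‖ < 1) :
    ‖(eulerFunction q)⁻¹‖ ≤ Real.exp ((q * (1 - q)⁻¹).re - ‖q‖ * (1 - ‖q‖)⁻¹) *
      ‖(eulerFunction (‖q‖ : ℂ))⁻¹‖ := by
  have hgeom : HasSum (fun n ↦ (q ^ (n + 1)).re - ‖q‖ ^ (n + 1))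
      ((q * (1 - q)⁻¹).re - ‖q‖ * (1 - ‖q‖)⁻¹) := by
    simp only [pow_succ']
    exact (Complex.reCLM.hasSum ((hasSum_geometric_of_norm_lt_one hq).mul_left q)).sub
      ((hasSum_geometric_of_lt_one (norm_nonneg q) hq).mul_left ‖q‖)
  refine le_of_tendsto_of_tendsto' (tendsto_prod_eulerFunction_inv hq).norm
    (((Real.continuous_exp.tendsto _).comp hgeom.tendsto_sum_nat).mul
      (tendsto_prod_eulerFunction_inv (q := (‖q‖ : ℂ)) (by simpa)).norm) fun m ↦ ?_
  simp only [Function.comp_apply, ← prod_inv_distrib, Real.exp_sum, norm_prod, ← prod_mul_distrib]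
  refine prod_le_prod (fun _ _ ↦ norm_nonneg _) fun i _ ↦ ?_
  have hqi : ‖q‖ ^ (i + 1) < 1 := pow_lt_one₀ (norm_nonneg q) hq i.succ_ne_zero
  rw [norm_inv (1 - (‖q‖ : ℂ) ^ (i + 1)), ← Complex.ofReal_pow, norm_one_sub_ofReal hqi.le,
    ← norm_pow]
  exact norm_inv_one_sub_le (by rwa [norm_pow])

end MinorArcs

section GaussianPrimitive

open Complex Set MeasureTheory

/-- The entire primitive of `exp (z ^ 2)` vanishing at the origin. -/
noncomputable def expSqPrimitive (z : ℂ) : ℂ := wedgeIntegral 0 z fun w ↦ cexp (w ^ 2)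

theorem isConservativeOn_exp_sq (U : Set ℂ) : IsConservativeOn (fun w ↦ cexp (w ^ 2)) U :=
  (Differentiable.differentiableOn (by fun_prop)).isConservativeOn

theorem hasDerivAt_expSqPrimitive (z : ℂ) : HasDerivAt expSqPrimitive (cexp (z ^ 2)) z :=
  (isConservativeOn_exp_sq (Metric.ball 0 (‖z‖ + 1))).hasDerivAt_wedgeIntegral
    (Continuous.continuousOn (by fun_prop)) (by simp)

theorem expSqPrimitive_eq_integral (z : ℂ) : expSqPrimitive z =
    (∫ x in 0..z.re, cexp ((x + z.im * I) ^ 2)) + I * ∫ y in 0..z.im, Real.exp (-y ^ 2) := by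
  rw [expSqPrimitive, isConservativeOn_exp_sq univ 0 z (subset_univ _), wedgeIntegral]
  simp only [zero_re, zero_im, intervalIntegral.integral_symm 0 z.re,
    intervalIntegral.integral_symm 0 z.im, ofReal_zero, zero_add, mul_pow, I_sq, smul_eq_mul,
    ← intervalIntegral.integral_ofReal, ofReal_exp]
  push_cast
  simp only [mul_neg, mul_one, neg_add, neg_neg]

theorem expSqPrimitive_conj (z : ℂ) :
    expSqPrimitive ((starRingEnd ℂ) z) = (starRingEnd ℂ) (expSqPrimitive z) := by
  have hhorizontal (x : ℝ) : cexp ((x + (-z.im : ℝ) * I) ^ 2) =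
      (starRingEnd ℂ) (cexp ((x + z.im * I) ^ 2)) := by
    simp [← exp_conj]
  have hvertical : ∫ y in 0..-z.im, Real.exp (-y ^ 2) = -∫ y in 0..z.im, Real.exp (-y ^ 2) := by
    rw [← intervalIntegral.integral_symm, ← neg_zero (G := ℝ),
      ← intervalIntegral.integral_comp_neg]
    simp only [neg_sq, neg_zero]
  rw [expSqPrimitive_eq_integral, expSqPrimitive_eq_integral, conj_re, conj_im, hvertical]
  simp only [hhorizontal, intervalIntegral.intervalIntegral_conj, map_add, map_mul, conj_I,
    conj_ofReal]
  push_cast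
  ring

theorem abs_im_expSqPrimitive_sub_le (z : ℂ) :
    |(expSqPrimitive z).im - ∫ y in 0..z.im, Real.exp (-y ^ 2)| ≤
      ‖z‖ * Real.exp (z ^ 2).re := by
  have hbound : ‖∫ x in 0..z.re, cexp ((x + z.im * I) ^ 2)‖ ≤
      Real.exp (z ^ 2).re * |z.re - 0| := by
    refine intervalIntegral.norm_integral_le_of_norm_le_const fun x hx ↦ ?_
    rw [Complex.norm_exp, Real.exp_le_exp]
    have hx2 : x ^ 2 ≤ z.re ^ 2 := sq_le_sq.mpr (by
      simpa using abs_sub_left_of_mem_uIcc (uIoc_subset_uIcc hx))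
    have hre : ((x + z.im * I) ^ 2).re = x ^ 2 - z.im ^ 2 := by simp [sq]
    have hre' : (z ^ 2).re = z.re ^ 2 - z.im ^ 2 := by simp [sq]
    linarith
  rw [expSqPrimitive_eq_integral, add_im, I_mul_im, ofReal_re, add_sub_cancel_right]
  calc _ ≤ ‖∫ x in 0..z.re, cexp ((x + z.im * I) ^ 2)‖ := abs_im_le_norm _
    _ ≤ Real.exp (z ^ 2).re * |z.re - 0| := hbound
    _ ≤ ‖z‖ * Real.exp (z ^ 2).re := by
      rw [sub_zero, mul_comm]
      gcongr
      exact abs_re_le_norm z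

theorem abs_integral_exp_neg_sq_sub_le {b : ℝ} (hb : 0 ≤ b) :
    |(∫ t in 0..b, Real.exp (-t ^ 2)) - √Real.pi / 2| ≤ √Real.pi / 2 * Real.exp (-b ^ 2) := by
  have hint : Integrable fun t : ℝ ↦ Real.exp (-t ^ 2) := by
    simpa using integrable_exp_neg_mul_sq one_pos
  have hgauss : ∫ t in Ioi (0 : ℝ), Real.exp (-t ^ 2) = √Real.pi / 2 := by
    simpa using integral_gaussian_Ioi 1
  have hsplit := intervalIntegral.integral_interval_add_Ioi hint.integrableOn
    (hint.integrableOn (s := Ioi b)) (a := 0)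
  have hshift : ∫ t in Ioi b, Real.exp (-t ^ 2) = ∫ t in Ioi 0, Real.exp (-(t + b) ^ 2) := by
    rw [← (measurePreserving_add_right volume b).setIntegral_preimage_emb
      (MeasurableEquiv.addRight b).measurableEmbedding]
    simp
  have htail : ∫ t in Ioi b, Real.exp (-t ^ 2) ≤ √Real.pi / 2 * Real.exp (-b ^ 2) := by
    rw [hshift, ← hgauss, ← integral_mul_const]
    refine setIntegral_mono_on (hint.comp_add_right b).integrableOn
      (hint.mul_const _).integrableOn measurableSet_Ioi fun t ht ↦ ?_
    rw [← Real.exp_add, Real.exp_le_exp]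
    nlinarith [mul_nonneg (le_of_lt ht) hb]
  have hnonneg : 0 ≤ ∫ t in Ioi b, Real.exp (-t ^ 2) :=
    setIntegral_nonneg measurableSet_Ioi fun _ _ ↦ by positivity
  rw [abs_le]
  constructor <;> linarith

end GaussianPrimitive

section BesselIntegral

open Complex

theorem abs_im_expSqPrimitive_sub_sqrt_pi_le {z : ℂ} (hz : 0 ≤ z.im) :
    |(expSqPrimitive z).im - √Real.pi / 2| ≤ (‖z‖ + √Real.pi / 2) * Real.exp (z ^ 2).re := by
  have hexp : Real.exp (-z.im ^ 2) ≤ Real.exp (z ^ 2).re := by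
    rw [Real.exp_le_exp, sq z, mul_re]
    nlinarith [sq_nonneg z.re]
  calc |(expSqPrimitive z).im - √Real.pi / 2|
    _ ≤ |(expSqPrimitive z).im - ∫ t in 0..z.im, Real.exp (-t ^ 2)| +
        |(∫ t in 0..z.im, Real.exp (-t ^ 2)) - √Real.pi / 2| := abs_sub_le _ _ _
    _ ≤ ‖z‖ * Real.exp (z ^ 2).re + √Real.pi / 2 * Real.exp (-z.im ^ 2) :=
      add_le_add (abs_im_expSqPrimitive_sub_le z) (abs_integral_exp_neg_sq_sub_le hz)
    _ ≤ ‖z‖ * Real.exp (z ^ 2).re + √Real.pi / 2 * Real.exp (z ^ 2).re := by gcongr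
    _ = (‖z‖ + √Real.pi / 2) * Real.exp (z ^ 2).re := by ring

/-- The Bessel-type kernel `√w exp (x (w + w⁻¹))` on the line `w = 1 + i y`. -/
noncomputable def besselKernel (x y : ℝ) : ℂ :=
  (1 + y * I).sqrt * cexp (x * (1 + y * I + (1 + y * I)⁻¹))

/-- A primitive of `2 s² exp (x (s² + s⁻²))` on `s ≠ 0`. Since
`s² + s⁻² = (s - s⁻¹)² + 2 = (s + s⁻¹)² - 2`, it is elementary up to the primitive of `exp (z²)`. -/
noncomputable def besselPrimitive (x : ℝ) (s : ℂ) : ℂ :=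
  s * cexp (x * (s ^ 2 + s⁻¹ ^ 2)) / x +
    ((1 - 1 / (2 * x)) * Real.exp (2 * x) / √x : ℝ) * expSqPrimitive (√x * (s - s⁻¹)) -
    ((1 + 1 / (2 * x)) * Real.exp (-(2 * x)) / √x : ℝ) * expSqPrimitive (√x * (s + s⁻¹))

theorem ofReal_sqrt_sq {x : ℝ} (hx : 0 ≤ x) : ((√x : ℝ) : ℂ) ^ 2 = x := by
  exact_mod_cast Real.sq_sqrt hx

theorem sqrt_mul_sub_inv_sq {x : ℝ} (hx : 0 ≤ x) {s : ℂ} (hs : s ≠ 0) :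
    (√x * (s - s⁻¹)) ^ 2 = x * (s ^ 2 + s⁻¹ ^ 2) - 2 * x := by
  rw [mul_pow, ofReal_sqrt_sq hx]
  field_simp
  ring

theorem sqrt_mul_add_inv_sq {x : ℝ} (hx : 0 ≤ x) {s : ℂ} (hs : s ≠ 0) :
    (√x * (s + s⁻¹)) ^ 2 = x * (s ^ 2 + s⁻¹ ^ 2) + 2 * x := by
  rw [mul_pow, ofReal_sqrt_sq hx]
  field_simp
  ring

theorem hasDerivAt_besselPrimitive {x : ℝ} (hx : 0 < x) {s : ℂ} (hs : s ≠ 0) :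
    HasDerivAt (besselPrimitive x) (2 * s ^ 2 * cexp (x * (s ^ 2 + s⁻¹ ^ 2))) s := by
  have hinv := hasDerivAt_inv hs
  have hphase := (((hasDerivAt_id s).pow 2).add (hinv.pow 2)).const_mul (x : ℂ)
  have hminus := (hasDerivAt_expSqPrimitive _).comp s
    (((hasDerivAt_id s).sub hinv).const_mul (√x : ℂ))
  have hplus := (hasDerivAt_expSqPrimitive _).comp s
    (((hasDerivAt_id s).add hinv).const_mul (√x : ℂ))
  refine ((((hasDerivAt_id s).mul hphase.cexp).div_const (x : ℂ)).add
    (hminus.const_mul _) |>.sub (hplus.const_mul _)).congr_deriv ?_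
  have hx' : (x : ℂ) ≠ 0 := ofReal_ne_zero.mpr hx.ne'
  have hrx : ((√x : ℝ) : ℂ) ≠ 0 := ofReal_ne_zero.mpr (Real.sqrt_pos.mpr hx).ne'
  simp only [id, Pi.add_apply, Pi.sub_apply, Pi.pow_apply, sqrt_mul_sub_inv_sq hx.le hs,
    sqrt_mul_add_inv_sq hx.le hs, exp_sub, exp_add _ (2 * x : ℂ)]
  push_cast
  rw [exp_neg]
  have := exp_ne_zero (2 * x)
  field_simp
  ring

theorem besselPrimitive_conj (x : ℝ) (s : ℂ) :
    besselPrimitive x ((starRingEnd ℂ) s) = (starRingEnd ℂ) (besselPrimitive x s) := by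
  simp only [besselPrimitive, map_add, map_sub, map_mul, map_div₀, map_inv₀, map_pow, conj_ofReal,
    ← exp_conj, ← expSqPrimitive_conj]

theorem sqrt_sq_eq (w : ℂ) : w.sqrt ^ 2 = w := by
  rw [Complex.sqrt, cpow_ofNat_inv_pow]

theorem norm_sqrt_sq (w : ℂ) : ‖w.sqrt‖ ^ 2 = ‖w‖ := by
  rw [← norm_pow, sqrt_sq_eq]

theorem sqrt_conj {w : ℂ} (hw : w ∈ slitPlane) :
    ((starRingEnd ℂ) w).sqrt = (starRingEnd ℂ) w.sqrt := by
  have hw0 := slitPlane_ne_zero hw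
  rw [sqrt_eq_exp hw0, sqrt_eq_exp ((map_ne_zero _).mpr hw0),
    log_conj _ (slitPlane_arg_ne_pi hw), ← exp_conj, map_div₀, map_ofNat]

theorem one_add_mul_I_mem_slitPlane (y : ℝ) : 1 + y * I ∈ slitPlane := Or.inl (by simp)

theorem sqrt_one_add_mul_I_ne_zero (y : ℝ) : (1 + y * I).sqrt ≠ 0 := fun h ↦
  slitPlane_ne_zero (one_add_mul_I_mem_slitPlane y) (by
    rw [← sqrt_sq_eq (1 + y * I), h, sq, zero_mul])

theorem hasDerivAt_sqrt_one_add_mul_I (y : ℝ) :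
    HasDerivAt (fun y : ℝ ↦ (1 + y * I).sqrt) (I / (2 * (1 + y * I).sqrt)) y := by
  have hw := one_add_mul_I_mem_slitPlane y
  have hline : HasDerivAt (fun y : ℝ ↦ 1 + y * I) I y := by
    simpa using ((hasDerivAt_id y).ofReal_comp.mul_const I).const_add 1
  refine ((hasDerivAt_sqrt hw).comp y hline).congr_deriv ?_
  rw [neg_div, cpow_neg, one_div, ← Complex.sqrt]
  ring

theorem hasDerivAt_besselPrimitive_sqrt {x : ℝ} (hx : 0 < x) (y : ℝ) :
    HasDerivAt (fun y : ℝ ↦ besselPrimitive x (1 + y * I).sqrt)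
      (I * besselKernel x y) y := by
  have hs := sqrt_one_add_mul_I_ne_zero y
  refine ((hasDerivAt_besselPrimitive hx hs).comp y
    (hasDerivAt_sqrt_one_add_mul_I y)).congr_deriv ?_
  rw [besselKernel, inv_pow, sqrt_sq_eq]
  nth_rw 1 [← sqrt_sq_eq (1 + y * I)]
  field_simp

theorem continuous_besselKernel (x : ℝ) : Continuous (besselKernel x) := by
  have hsqrt : Continuous fun y : ℝ ↦ (1 + y * I).sqrt :=
    continuous_iff_continuousAt.mpr fun y ↦ (hasDerivAt_sqrt_one_add_mul_I y).continuousAt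
  have hinv : Continuous fun y : ℝ ↦ (1 + y * I)⁻¹ :=
    Continuous.inv₀ (by fun_prop) fun y ↦ slitPlane_ne_zero (one_add_mul_I_mem_slitPlane y)
  unfold besselKernel
  fun_prop

theorem integral_besselKernel {x : ℝ} (hx : 0 < x) (Y : ℝ) :
    ∫ y in -Y..Y, besselKernel x y = (2 * (besselPrimitive x (1 + Y * I).sqrt).im : ℝ) := by
  have hconj : (1 + ((-Y : ℝ) : ℂ) * I).sqrt = (starRingEnd ℂ) (1 + Y * I).sqrt := by
    rw [← sqrt_conj (one_add_mul_I_mem_slitPlane Y)]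
    simp
  apply mul_left_cancel₀ I_ne_zero
  rw [← intervalIntegral.integral_const_mul, intervalIntegral.integral_eq_sub_of_hasDerivAt
    (fun y _ ↦ hasDerivAt_besselPrimitive_sqrt hx y)
    ((continuous_const.mul (continuous_besselKernel x)).intervalIntegrable _ _),
    hconj, besselPrimitive_conj, sub_conj, mul_comm]

section Estimates

variable {x : ℝ} {s : ℂ}

theorem sqrt_pi_div_two_le_one : √Real.pi / 2 ≤ 1 := by
  rw [div_le_one two_pos, Real.sqrt_le_left zero_le_two]
  linarith [Real.pi_le_four]

theorem im_inv_nonpos (him : 0 ≤ s.im) : s⁻¹.im ≤ 0 := by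
  rw [inv_im, neg_div]
  exact neg_nonpos.mpr (div_nonneg him (normSq_nonneg s))

theorem im_add_inv_nonneg (hs : 1 ≤ ‖s‖) (him : 0 ≤ s.im) : 0 ≤ (s + s⁻¹).im := by
  have hnormSq : 1 ≤ normSq s := by
    rw [normSq_eq_norm_sq]
    exact one_le_pow₀ hs
  rw [add_im, inv_im, neg_div, ← sub_eq_add_neg, sub_nonneg]
  exact div_le_self him hnormSq

theorem norm_inv_le_norm {K : Type*} [NormedDivisionRing K] {s : K} (hs : 1 ≤ ‖s‖) :
    ‖s⁻¹‖ ≤ ‖s‖ := by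
  rw [norm_inv]
  exact (inv_le_one_of_one_le₀ hs).trans hs

theorem exp_mul_abs_im_expSqPrimitive_sub_inv_le (hx : 1 ≤ x) (hs : 1 ≤ ‖s‖) (him : 0 ≤ s.im) :
    Real.exp (2 * x) * |(expSqPrimitive (√x * (s - s⁻¹))).im - √Real.pi / 2| ≤
      3 * ‖s‖ * Real.exp (x * (s ^ 2 + s⁻¹ ^ 2).re) * √x := by
  have hs0 : s ≠ 0 := norm_pos_iff.mp (one_pos.trans_le hs)
  have him' : 0 ≤ (√x * (s - s⁻¹)).im := by
    rw [im_ofReal_mul, sub_im]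
    exact mul_nonneg (Real.sqrt_nonneg x) (by linarith [im_inv_nonpos him])
  have hnorm : ‖√x * (s - s⁻¹)‖ ≤ √x * (2 * ‖s‖) := by
    rw [norm_mul, Complex.norm_of_nonneg (Real.sqrt_nonneg x)]
    gcongr
    linarith [norm_sub_le s s⁻¹, norm_inv_le_norm hs]
  have hone : 1 ≤ √x * ‖s‖ := one_le_mul_of_one_le_of_one_le (Real.one_le_sqrt.mpr hx) hs
  have hbound := abs_im_expSqPrimitive_sub_sqrt_pi_le him'
  rw [sqrt_mul_sub_inv_sq (zero_le_one.trans hx) hs0, sub_re, re_ofReal_mul,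
    show (2 * x : ℂ).re = 2 * x by simp, Real.exp_sub, mul_div_assoc', le_div_iff₀' (by positivity)]
    at hbound
  refine hbound.trans ?_
  rw [mul_right_comm]
  gcongr
  linarith [sqrt_pi_div_two_le_one]

theorem exp_neg_mul_abs_im_expSqPrimitive_add_inv_le (hx : 1 ≤ x) (hs : 1 ≤ ‖s‖) (him : 0 ≤ s.im)
    (hre : 0 ≤ (s ^ 2 + s⁻¹ ^ 2).re) :
    Real.exp (-(2 * x)) * |(expSqPrimitive (√x * (s + s⁻¹))).im| ≤
      4 * ‖s‖ * Real.exp (x * (s ^ 2 + s⁻¹ ^ 2).re) * √x := by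
  have hs0 : s ≠ 0 := norm_pos_iff.mp (one_pos.trans_le hs)
  have him' : 0 ≤ (√x * (s + s⁻¹)).im := by
    rw [im_ofReal_mul]
    exact mul_nonneg (Real.sqrt_nonneg x) (im_add_inv_nonneg hs him)
  have hnorm : ‖√x * (s + s⁻¹)‖ ≤ √x * (2 * ‖s‖) := by
    rw [norm_mul, Complex.norm_of_nonneg (Real.sqrt_nonneg x)]
    gcongr
    linarith [norm_add_le s s⁻¹, norm_inv_le_norm hs]
  have hone : 1 ≤ √x * ‖s‖ := one_le_mul_of_one_le_of_one_le (Real.one_le_sqrt.mpr hx) hs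
  have hexp : 1 ≤ Real.exp (x * (s ^ 2 + s⁻¹ ^ 2).re + 2 * x) :=
    Real.one_le_exp (by positivity)
  have hbound := abs_im_expSqPrimitive_sub_sqrt_pi_le him'
  rw [sqrt_mul_add_inv_sq (zero_le_one.trans hx) hs0, add_re, re_ofReal_mul,
    show (2 * x : ℂ).re = 2 * x by simp] at hbound
  rw [Real.exp_neg, inv_mul_le_iff₀ (by positivity), mul_right_comm, mul_left_comm, ← Real.exp_add,
    add_comm (2 * x)]
  have hQ := sqrt_pi_div_two_le_one
  have hQ0 : 0 ≤ √Real.pi / 2 := by positivity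
  calc |(expSqPrimitive (√x * (s + s⁻¹))).im|
    _ ≤ |(expSqPrimitive (√x * (s + s⁻¹))).im - √Real.pi / 2| + √Real.pi / 2 := by
      linarith [abs_sub_abs_le_abs_sub (expSqPrimitive (√x * (s + s⁻¹))).im (√Real.pi / 2),
        abs_of_nonneg hQ0]
    _ ≤ (√x * (2 * ‖s‖) + 1) * Real.exp (x * (s ^ 2 + s⁻¹ ^ 2).re + 2 * x) +
        1 * Real.exp (x * (s ^ 2 + s⁻¹ ^ 2).re + 2 * x) := by
      refine add_le_add (hbound.trans (by gcongr)) ?_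
      linarith
    _ ≤ 4 * ‖s‖ * √x * Real.exp (x * (s ^ 2 + s⁻¹ ^ 2).re + 2 * x) := by
      rw [← add_mul]
      gcongr
      linarith

theorem abs_mul_div_mul_le {c C e r t B : ℝ} (hc : 0 ≤ c) (hcC : c ≤ C) (he : 0 ≤ e) (hr : 0 < r)
    (h : e * |t| ≤ B * r) : |c * e / r * t| ≤ C * B := by
  rw [abs_mul, abs_of_nonneg (by positivity), div_mul_eq_mul_div, div_le_iff₀ hr, mul_assoc,
    mul_assoc]
  exact mul_le_mul hcC h (by positivity) (hc.trans hcC)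

theorem abs_im_besselPrimitive_sub_le (hx : 1 ≤ x) (hs : 1 ≤ ‖s‖) (him : 0 ≤ s.im)
    (hre : 0 ≤ (s ^ 2 + s⁻¹ ^ 2).re) :
    |2 * (besselPrimitive x s).im - Real.exp (2 * x) * √(Real.pi / x) * (1 - 1 / (2 * x))| ≤
      20 * ‖s‖ * Real.exp (x * (s ^ 2 + s⁻¹ ^ 2).re) := by
  have hx0 : 0 < x := one_pos.trans_le hx
  have hr : 0 < √x := Real.sqrt_pos.mpr hx0
  have hinvx : 1 / (2 * x) ≤ 1 / 2 := one_div_le_one_div_of_le two_pos (by linarith)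
  have hinvx0 : 0 < 1 / (2 * x) := by positivity
  have helementary : |(s * cexp (x * (s ^ 2 + s⁻¹ ^ 2)) / x).im| ≤
      ‖s‖ * Real.exp (x * (s ^ 2 + s⁻¹ ^ 2).re) := by
    refine (abs_im_le_norm _).trans ?_
    rw [norm_div, norm_mul, norm_exp, re_ofReal_mul, Complex.norm_of_nonneg hx0.le]
    exact div_le_self (by positivity) hx
  have hminus := abs_mul_div_mul_le (by linarith) (by linarith : 1 - 1 / (2 * x) ≤ 1)
    (Real.exp_nonneg _) hr (exp_mul_abs_im_expSqPrimitive_sub_inv_le hx hs him)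
  have hplus := abs_mul_div_mul_le (by linarith) (by linarith : 1 + 1 / (2 * x) ≤ 3 / 2)
    (Real.exp_nonneg _) hr (exp_neg_mul_abs_im_expSqPrimitive_add_inv_le hx hs him hre)
  have hsplit : 2 * (besselPrimitive x s).im -
      Real.exp (2 * x) * √(Real.pi / x) * (1 - 1 / (2 * x)) =
      2 * (s * cexp (x * (s ^ 2 + s⁻¹ ^ 2)) / x).im +
        2 * ((1 - 1 / (2 * x)) * Real.exp (2 * x) / √x *
          ((expSqPrimitive (√x * (s - s⁻¹))).im - √Real.pi / 2)) -
        2 * ((1 + 1 / (2 * x)) * Real.exp (-(2 * x)) / √x *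
          (expSqPrimitive (√x * (s + s⁻¹))).im) := by
    rw [besselPrimitive, sub_im, add_im, im_ofReal_mul, im_ofReal_mul, Real.sqrt_div Real.pi_nonneg]
    ring
  rw [hsplit]
  rw [abs_le] at *
  constructor <;> linarith

end Estimates

theorem norm_integral_besselKernel_sub_le {x Y : ℝ} (hx : 1 ≤ x) (hY : 0 ≤ Y) :
    ‖(∫ y in -Y..Y, besselKernel x y) -
      (Real.exp (2 * x) * √(Real.pi / x) * (1 - 1 / (2 * x)) : ℝ)‖ ≤
    20 * √‖1 + Y * I‖ * Real.exp (x * (1 + 1 / (1 + Y ^ 2))) := by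
  have hre : ((1 + Y * I).sqrt ^ 2 + (1 + Y * I).sqrt⁻¹ ^ 2).re = 1 + 1 / (1 + Y ^ 2) := by
    simp [inv_pow, sqrt_sq_eq, normSq_apply, ← sq]
  have hnorm : ‖(1 + Y * I).sqrt‖ = √‖1 + Y * I‖ := by
    rw [← norm_sqrt_sq (1 + Y * I), Real.sqrt_sq (norm_nonneg _)]
  have hnorm_ge : 1 ≤ ‖(1 + Y * I).sqrt‖ := by
    rw [hnorm, Real.one_le_sqrt]
    simpa using abs_re_le_norm (1 + Y * I)
  have him : 0 ≤ (1 + Y * I).sqrt.im := by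
    rw [Complex.sqrt, cpow_inv_two_im_eq_sqrt (by simpa using hY)]
    exact Real.sqrt_nonneg _
  rw [integral_besselKernel (one_pos.trans_le hx), ← ofReal_sub, norm_real, Real.norm_eq_abs,
    ← hre, ← hnorm]
  exact abs_im_besselPrimitive_sub_le hx hnorm_ge him (by rw [hre]; positivity)

end BesselIntegral

section CircleMethod

open Complex Real

/-- The integrand of Cauchy's formula for `p(n)` on the circle of radius `exp (-α)`, in the variable
`q = exp (-α (1 + i y))`. -/
noncomputable def circleIntegrand (n : ℕ) (α y : ℝ) : ℂ :=
  (eulerFunction (cexp (-(α * (1 + y * I)))))⁻¹ * cexp (n * (α * (1 + y * I)))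

/-- The factor by which the modular transformation corrects the Bessel kernel. -/
noncomputable def dualFactor (x y : ℝ) : ℂ :=
  (eulerFunction (cexp (-(24 * x * (1 + y * I)⁻¹))))⁻¹

theorem continuous_circleIntegrand (n : ℕ) {α : ℝ} (hα : 0 < α) :
    Continuous (circleIntegrand n α) := by
  have hr : rexp (-α) < 1 := Real.exp_lt_one_iff.mpr (neg_neg_of_pos hα)
  have hseries (y : ℝ) : (eulerFunction (cexp (-(α * (1 + y * I)))))⁻¹ =
      ∑' k, (partitionCount k : ℂ) * cexp (-(α * (1 + y * I))) ^ k :=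
    (hasSum_partitionCount_mul_pow (by rwa [norm_cexp_neg_mul_one_add_I])).tsum_eq.symm
  unfold circleIntegrand
  simp_rw [hseries]
  refine .mul (continuous_tsum (fun k ↦ by fun_prop)
    (summable_partitionCount_mul_pow (Real.exp_nonneg _) hr) fun k y ↦ ?_) (by fun_prop)
  rw [norm_mul, norm_pow, norm_cexp_neg_mul_one_add_I, Complex.norm_natCast]

theorem sqrt_ofReal_mul {t : ℝ} (ht : 0 < t) {w : ℂ} (hw : w ≠ 0) :
    (t * w).sqrt = √t * w.sqrt := by
  have ht' : (t : ℂ) ≠ 0 := ofReal_ne_zero.mpr ht.ne'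
  rw [sqrt_eq_exp (mul_ne_zero ht' hw), sqrt_eq_exp hw, log_ofReal_mul ht hw, add_div,
    Complex.exp_add, ← ofReal_ofNat, ← ofReal_div, ← ofReal_exp, Real.exp_half, Real.exp_log ht]

theorem circleIntegrand_eq {n : ℕ} {x α : ℝ} (hα : 0 < α) (hx : α * x = π ^ 2 / 6)
    (hn : α * (n - 1 / 24) = x) (y : ℝ) :
    circleIntegrand n α y = √(α / (2 * π)) * (besselKernel x y * dualFactor x y) := by
  have hw : 1 + y * I ≠ 0 := slitPlane_ne_zero (one_add_mul_I_mem_slitPlane y)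
  have hα' : (α : ℂ) ≠ 0 := ofReal_ne_zero.mpr hα.ne'
  have hpi : (π : ℂ) ^ 2 = 6 * (α * x) := by
    exact_mod_cast (by linarith : π ^ 2 = 6 * (α * x))
  have hn' : (α : ℂ) * (n - 1 / 24) = x := by rw [← hn]; push_cast; ring
  have hdual : 4 * (π : ℂ) ^ 2 / (α * (1 + y * I)) = 24 * x * (1 + y * I)⁻¹ := by
    rw [hpi]
    field_simp
    ring
  have hphase : cexp (π ^ 2 / 6 / (α * (1 + y * I)) - α * (1 + y * I) / 24) *
      cexp (n * (α * (1 + y * I))) = cexp (x * (1 + y * I + (1 + y * I)⁻¹)) := by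
    rw [← Complex.exp_add, hpi]
    congr 1
    field_simp
    linear_combination 24 * (1 + y * I) ^ 2 * hn'
  have hsqrt : (α * (1 + y * I) / (2 * π)).sqrt = √(α / (2 * π)) * (1 + y * I).sqrt := by
    rw [← sqrt_ofReal_mul (by positivity) hw, ofReal_div]
    push_cast
    ring_nf
  rw [circleIntegrand, eulerFunction_cexp_neg_inv (by simpa), hdual, hsqrt, besselKernel,
    dualFactor, ← hphase]
  ring

theorem norm_besselKernel (x y : ℝ) :
    ‖besselKernel x y‖ = √‖1 + y * I‖ * rexp (x * (1 + 1 / (1 + y ^ 2))) := by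
  rw [besselKernel, norm_mul, ← norm_sqrt_sq (1 + y * I), Real.sqrt_sq (norm_nonneg _),
    Complex.norm_exp, re_ofReal_mul]
  simp [normSq_apply, ← sq]

theorem norm_cexp_neg_mul_inv (x y : ℝ) :
    ‖cexp (-(24 * x * (1 + y * I)⁻¹))‖ = rexp (-(24 * x / (1 + y ^ 2))) := by
  rw [Complex.norm_exp]
  simp [normSq_apply, ← sq, div_eq_mul_inv]

theorem exp_neg_mul_div_one_add_sq_le {x y : ℝ} (hy : 1 + y ^ 2 ≤ 8 * x) :
    rexp (-(24 * x / (1 + y ^ 2))) ≤ 1 / 4 := by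
  have hthree : 3 ≤ 24 * x / (1 + y ^ 2) := by
    rw [le_div_iff₀ (by positivity)]
    linarith
  rw [Real.exp_neg, ← one_div]
  exact one_div_le_one_div_of_le four_pos (by linarith [add_one_le_exp (24 * x / (1 + y ^ 2))])

theorem norm_dualFactor_sub_one_le {x y : ℝ} (hy : 1 + y ^ 2 ≤ 8 * x) :
    ‖dualFactor x y - 1‖ ≤ 2 * rexp (-(24 * x / (1 + y ^ 2))) := by
  rw [← norm_cexp_neg_mul_inv]
  refine norm_eulerFunction_inv_sub_one_le ?_
  rw [norm_cexp_neg_mul_inv]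
  exact exp_neg_mul_div_one_add_sq_le hy

theorem norm_dualFactor_le {x y : ℝ} (hy : 1 + y ^ 2 ≤ 8 * x) : ‖dualFactor x y‖ ≤ 3 / 2 := by
  have htriangle := norm_add_le (dualFactor x y - 1) 1
  rw [sub_add_cancel, norm_one] at htriangle
  linarith [norm_dualFactor_sub_one_le hy, exp_neg_mul_div_one_add_sq_le hy]

theorem norm_circleIntegrand_sub_le {n : ℕ} {x α y : ℝ} (hα : 0 < α)
    (hx : α * x = π ^ 2 / 6) (hn : α * (n - 1 / 24) = x) (hy : 1 + y ^ 2 ≤ 8 * x) :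
    ‖circleIntegrand n α y - √(α / (2 * π)) * besselKernel x y‖ ≤
      √(α / (2 * π)) * (2 * √‖1 + y * I‖ * rexp x) := by
  have hx0 : 0 ≤ x := by linarith [sq_nonneg y]
  rw [circleIntegrand_eq hα hx hn, ← mul_sub, ← mul_sub_one, norm_mul, norm_mul, norm_real,
    Real.norm_of_nonneg (Real.sqrt_nonneg _), norm_besselKernel]
  refine mul_le_mul_of_nonneg_left ?_ (Real.sqrt_nonneg _)
  calc √‖1 + y * I‖ * rexp (x * (1 + 1 / (1 + y ^ 2))) * ‖dualFactor x y - 1‖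
      ≤ √‖1 + y * I‖ * rexp (x * (1 + 1 / (1 + y ^ 2))) *
          (2 * rexp (-(24 * x / (1 + y ^ 2)))) := by
        gcongr
        exact norm_dualFactor_sub_one_le hy
    _ = 2 * √‖1 + y * I‖ * rexp (x - 23 * (x / (1 + y ^ 2))) := by
        rw [show x - 23 * (x / (1 + y ^ 2)) =
          x * (1 + 1 / (1 + y ^ 2)) + -(24 * x / (1 + y ^ 2)) by ring, Real.exp_add]
        ring
    _ ≤ 2 * √‖1 + y * I‖ * rexp x := by
        gcongr
        linarith [show 0 ≤ x / (1 + y ^ 2) by positivity]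

theorem norm_integral_circleIntegrand_sub_le {n : ℕ} {x α Y : ℝ} (hα : 0 < α)
    (hx : α * x = π ^ 2 / 6) (hn : α * (n - 1 / 24) = x) (hx1 : 1 ≤ x) (hY : 0 ≤ Y)
    (hYx : 1 + Y ^ 2 ≤ 8 * x) :
    ‖(∫ y in -Y..Y, circleIntegrand n α y) -
      √(α / (2 * π)) * (rexp (2 * x) * √(π / x) * (1 - 1 / (2 * x)) : ℝ)‖ ≤
    √(α / (2 * π)) * (√‖1 + Y * I‖ *
      (20 * rexp (x * (1 + 1 / (1 + Y ^ 2))) + 4 * Y * rexp x)) := by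
  have hcorrection : ‖∫ y in -Y..Y,
      (circleIntegrand n α y - √(α / (2 * π)) * besselKernel x y)‖ ≤
      √(α / (2 * π)) * (2 * √‖1 + Y * I‖ * rexp x) * |Y - -Y| := by
    refine intervalIntegral.norm_integral_le_of_norm_le_const fun y hy ↦ ?_
    have hyY : y ^ 2 ≤ Y ^ 2 := by
      rw [Set.uIoc_of_le (by linarith)] at hy
      exact sq_le_sq' hy.1.le hy.2
    refine (norm_circleIntegrand_sub_le hα hx hn (by linarith)).trans ?_
    have hnorm : ‖1 + y * I‖ ≤ ‖1 + Y * I‖ := by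
      rw [norm_def, norm_def]
      gcongr
      simpa [normSq_apply, ← sq]
    gcongr
  rw [intervalIntegral.integral_sub ((continuous_circleIntegrand n hα).intervalIntegrable _ _)
    (((continuous_besselKernel x).const_mul _).intervalIntegrable _ _),
    intervalIntegral.integral_const_mul, sub_neg_eq_add, abs_of_nonneg (by linarith)] at hcorrection
  have hmain : ‖√(α / (2 * π)) * (∫ y in -Y..Y, besselKernel x y) -
      √(α / (2 * π)) * (rexp (2 * x) * √(π / x) * (1 - 1 / (2 * x)) : ℝ)‖ ≤
      √(α / (2 * π)) * (20 * √‖1 + Y * I‖ * rexp (x * (1 + 1 / (1 + Y ^ 2)))) := by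
    rw [← mul_sub, norm_mul, norm_real, Real.norm_of_nonneg (Real.sqrt_nonneg _)]
    gcongr
    exact norm_integral_besselKernel_sub_le hx1 hY
  have hsum := norm_add_le_of_le hcorrection hmain
  rw [sub_add_sub_cancel] at hsum
  linarith

theorem norm_one_sub_cexp_sq (α y : ℝ) :
    ‖1 - cexp (-(α * (1 + y * I)))‖ ^ 2 =
      (1 - rexp (-α)) ^ 2 + 2 * rexp (-α) * (1 - Real.cos (α * y)) := by
  rw [← normSq_eq_norm_sq, normSq_apply, sub_re, sub_im, exp_re, exp_im]
  simp only [neg_re, neg_im, add_re, add_im, one_re, one_im, mul_re, mul_im, ofReal_re,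
    ofReal_im, I_re, I_im, mul_zero, zero_mul, mul_one, sub_zero, zero_add, add_zero,
    Real.cos_neg, Real.sin_neg]
  linear_combination rexp (-α) ^ 2 * Real.sin_sq_add_cos_sq (α * y)

theorem mul_exp_neg_le_one_sub_exp_neg (α : ℝ) : α * rexp (-α) ≤ 1 - rexp (-α) := by
  have hinv : rexp α * rexp (-α) = 1 := by rw [← Real.exp_add, add_neg_cancel, Real.exp_zero]
  nlinarith [add_one_le_exp α, Real.exp_pos (-α)]

theorem mul_le_norm_one_sub_cexp_sq {α y : ℝ} (hα : 0 ≤ α) (hy : |α * y| ≤ π) :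
    (α * rexp (-α)) ^ 2 * (1 + 2 * y ^ 2 / 5) ≤ ‖1 - cexp (-(α * (1 + y * I)))‖ ^ 2 := by
  have hr : rexp (-α) ≤ 1 := Real.exp_le_one_iff.mpr (neg_nonpos.mpr hα)
  have hpi : π ^ 2 ≤ 10 := by nlinarith [pi_lt_d2, pi_pos]
  have hcos : (α * y) ^ 2 / 5 ≤ 1 - Real.cos (α * y) := by
    have hquad := Real.cos_le_one_sub_mul_cos_sq hy
    have hcoeff : 2 / 10 * (α * y) ^ 2 ≤ 2 / π ^ 2 * (α * y) ^ 2 := by gcongr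
    linarith
  calc (α * rexp (-α)) ^ 2 * (1 + 2 * y ^ 2 / 5)
      = (α * rexp (-α)) ^ 2 + 2 * (rexp (-α) * rexp (-α)) * ((α * y) ^ 2 / 5) := by ring
    _ ≤ (1 - rexp (-α)) ^ 2 + 2 * (rexp (-α) * 1) * (1 - Real.cos (α * y)) := by
      gcongr
      exact mul_exp_neg_le_one_sub_exp_neg α
    _ = ‖1 - cexp (-(α * (1 + y * I)))‖ ^ 2 := by
      rw [norm_one_sub_cexp_sq, mul_one]

theorem norm_eulerFunction_inv_cexp_le {α y : ℝ} (hα : 0 < α) (hy : 10 ≤ |y|)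
    (hy' : |α * y| ≤ π) :
    ‖(eulerFunction (cexp (-(α * (1 + y * I)))))⁻¹‖ ≤
      rexp (1 - 27 / (32 * α)) * ‖(eulerFunction (cexp (-α)))⁻¹‖ := by
  set q := cexp (-(α * (1 + y * I)))
  have hr : rexp (-α) < 1 := Real.exp_lt_one_iff.mpr (neg_neg_of_pos hα)
  have hq : ‖q‖ = rexp (-α) := norm_cexp_neg_mul_one_add_I α y
  have hdist : 32 / 5 * (α * rexp (-α)) ≤ ‖1 - q‖ := by
    refine le_of_sq_le_sq (le_trans ?_ (mul_le_norm_one_sub_cexp_sq hα.le hy')) (norm_nonneg _)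
    have hysq : 10 ^ 2 ≤ y ^ 2 := by rw [← sq_abs y]; gcongr
    rw [mul_pow, mul_comm]
    gcongr
    linarith
  have hre : (q * (1 - q)⁻¹).re ≤ 5 / (32 * α) := by
    refine (re_le_norm _).trans ?_
    rw [norm_mul, norm_inv, hq, ← div_eq_mul_inv,
      div_le_div_iff₀ (lt_of_lt_of_le (by positivity) hdist) (by positivity)]
    linarith
  have hgeom : 1 / α - 1 ≤ rexp (-α) * (1 - rexp (-α))⁻¹ := by
    rw [← div_eq_mul_inv, le_div_iff₀ (sub_pos.mpr hr), sub_mul, div_mul_eq_mul_div,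
      sub_le_iff_le_add, div_le_iff₀ hα]
    linarith [mul_exp_neg_le_one_sub_exp_neg α, one_sub_le_exp_neg α]
  have hbound := norm_eulerFunction_inv_le (hq ▸ hr : ‖q‖ < 1)
  rw [hq] at hbound
  refine hbound.trans ?_
  push_cast
  refine mul_le_mul_of_nonneg_right (Real.exp_le_exp.mpr ?_) (norm_nonneg _)
  have hsplit : 27 / (32 * α) = 1 / α - 5 / (32 * α) := by field_simp; norm_num
  linarith

theorem norm_circleIntegrand_le {n : ℕ} {x α y : ℝ} (hα : 0 < α) (hx : α * x = π ^ 2 / 6)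
    (hn : α * (n - 1 / 24) = x) (hx1 : 1 ≤ x) (hy : 10 ≤ |y|) (hy' : |α * y| ≤ π) :
    ‖circleIntegrand n α y‖ ≤ √(α / (2 * π)) * (9 / 2 * rexp (3 / 2 * x)) := by
  have hcentre : ‖circleIntegrand n α 0‖ =
      √(α / (2 * π)) * (rexp (2 * x) * ‖dualFactor x 0‖) := by
    rw [circleIntegrand_eq hα hx hn, norm_mul, norm_mul, norm_real,
      Real.norm_of_nonneg (Real.sqrt_nonneg _), norm_besselKernel]
    norm_num [mul_comm x]
  have hratio : ‖circleIntegrand n α y‖ ≤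
      rexp (1 - 27 / (32 * α)) * ‖circleIntegrand n α 0‖ := by
    have hphase : ‖cexp (n * (α * (1 + y * I)))‖ = ‖cexp (n * (α * (1 + (0 : ℝ) * I)))‖ := by
      simp [Complex.norm_exp]
    rw [circleIntegrand, circleIntegrand, norm_mul, norm_mul, hphase, ← mul_assoc (rexp _)]
    refine mul_le_mul_of_nonneg_right ?_ (norm_nonneg _)
    rw [ofReal_zero, zero_mul, add_zero, mul_one]
    exact norm_eulerFunction_inv_cexp_le hα hy hy'
  have hexponent : 1 - 27 / (32 * α) ≤ 1 - x / 2 := by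
    have hhalf : x / 2 ≤ 27 / (32 * α) := by
      rw [le_div_iff₀ (by positivity)]
      nlinarith [pi_lt_d2, pi_pos]
    linarith
  calc ‖circleIntegrand n α y‖
      ≤ rexp (1 - x / 2) * (√(α / (2 * π)) * (rexp (2 * x) * (3 / 2))) := by
        rw [hcentre] at hratio
        refine hratio.trans ?_
        gcongr
        exact norm_dualFactor_le (by linarith)
    _ = √(α / (2 * π)) * (3 / 2 * (rexp 1 * rexp (3 / 2 * x))) := by
        rw [← Real.exp_add, show 1 + 3 / 2 * x = (1 - x / 2) + 2 * x by ring, Real.exp_add]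
        ring
    _ ≤ √(α / (2 * π)) * (3 / 2 * (3 * rexp (3 / 2 * x))) := by
        gcongr
        exact exp_one_lt_three.le
    _ = √(α / (2 * π)) * (9 / 2 * rexp (3 / 2 * x)) := by ring

theorem norm_integral_circleIntegrand_sub_integral_le {n : ℕ} {x α : ℝ} (hα : 0 < α)
    (hx : α * x = π ^ 2 / 6) (hn : α * (n - 1 / 24) = x) (hx7 : 7 ≤ x) :
    ‖(∫ y in -(π / α)..π / α, circleIntegrand n α y) - ∫ y in (-10)..10, circleIntegrand n α y‖ ≤
      √(α / (2 * π)) * (18 * x * rexp (3 / 2 * x)) := by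
  have hT : π / α = 6 * x / π := by
    rw [div_eq_div_iff hα.ne' pi_ne_zero]
    linarith
  have hT10 : 10 ≤ π / α := by
    rw [hT, le_div_iff₀ pi_pos]
    linarith [pi_lt_four]
  have hTx : π / α ≤ 2 * x := by
    rw [hT, div_le_iff₀ pi_pos]
    nlinarith [pi_gt_three]
  have hminor {y : ℝ} (hy : 10 ≤ |y|) (hy' : |y| ≤ π / α) :
      ‖circleIntegrand n α y‖ ≤ √(α / (2 * π)) * (9 / 2 * rexp (3 / 2 * x)) := by
    refine norm_circleIntegrand_le hα hx hn (by linarith) hy ?_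
    rwa [abs_mul, abs_of_pos hα, ← le_div_iff₀' hα]
  have hleft : ‖∫ y in -(π / α)..(-10), circleIntegrand n α y‖ ≤
      √(α / (2 * π)) * (9 / 2 * rexp (3 / 2 * x)) * |-10 - -(π / α)| := by
    refine intervalIntegral.norm_integral_le_of_norm_le_const fun y hy ↦ ?_
    rw [Set.uIoc_of_le (by linarith)] at hy
    exact hminor (le_abs.mpr (.inr (by linarith [hy.2])))
      (abs_le.mpr ⟨hy.1.le, by linarith [hy.2]⟩)
  have hright : ‖∫ y in 10..π / α, circleIntegrand n α y‖ ≤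
      √(α / (2 * π)) * (9 / 2 * rexp (3 / 2 * x)) * |π / α - 10| := by
    refine intervalIntegral.norm_integral_le_of_norm_le_const fun y hy ↦ ?_
    rw [Set.uIoc_of_le hT10] at hy
    exact hminor (le_abs.mpr (.inl hy.1.le)) (abs_le.mpr ⟨by linarith [hy.1], hy.2⟩)
  have hint (a b : ℝ) : IntervalIntegrable (circleIntegrand n α) MeasureTheory.volume a b :=
    (continuous_circleIntegrand n hα).intervalIntegrable a b
  rw [intervalIntegral.integral_interval_sub_interval_comm (hint _ _) (hint _ _) (hint _ _),
    intervalIntegral.integral_symm 10 (π / α), sub_neg_eq_add]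
  refine (norm_add_le_of_le hleft hright).trans ?_
  rw [← mul_add, mul_assoc, abs_of_nonneg (by linarith), abs_of_nonneg (by linarith)]
  refine mul_le_mul_of_nonneg_left ?_ (Real.sqrt_nonneg _)
  nlinarith [Real.exp_pos (3 / 2 * x)]

theorem norm_integral_circleIntegrand_sub_le_of_le {n : ℕ} {x α : ℝ} (hα : 0 < α)
    (hx : α * x = π ^ 2 / 6) (hn : α * (n - 1 / 24) = x) (hx40 : 40 ≤ x) :
    ‖(∫ y in -(π / α)..π / α, circleIntegrand n α y) -
      √(α / (2 * π)) * (rexp (2 * x) * √(π / x) * (1 - 1 / (2 * x)) : ℝ)‖ ≤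
      √(α / (2 * π)) * (19 * x * rexp (3 / 2 * x)) := by
  have hmajor := norm_integral_circleIntegrand_sub_le (Y := 10) hα hx hn (by linarith)
    (by norm_num) (by linarith)
  have hminor := norm_integral_circleIntegrand_sub_integral_le hα hx hn (by linarith)
  have hroot : √‖1 + (10 : ℝ) * I‖ ≤ 4 := by
    rw [Real.sqrt_le_left four_pos.le]
    refine (norm_add_le _ _).trans ?_
    norm_num
  have hexp : 6 * rexp (x * (1 + 1 / (1 + 10 ^ 2))) ≤ rexp (3 / 2 * x) := by
    rw [show 3 / 2 * x = 99 / 202 * x + x * (1 + 1 / (1 + 10 ^ 2)) by ring, Real.exp_add]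
    gcongr
    linarith [add_one_le_exp (99 / 202 * x)]
  have hexp' : rexp x ≤ rexp (x * (1 + 1 / (1 + 10 ^ 2))) := by
    gcongr
    linarith
  have herror : √‖1 + (10 : ℝ) * I‖ * (20 * rexp (x * (1 + 1 / (1 + 10 ^ 2))) +
      4 * 10 * rexp x) ≤ x * rexp (3 / 2 * x) :=
    calc _ ≤ 4 * (20 * rexp (x * (1 + 1 / (1 + 10 ^ 2))) + 4 * 10 * rexp x) := by gcongr
      _ ≤ 40 * rexp (3 / 2 * x) := by linarith
      _ ≤ x * rexp (3 / 2 * x) := by gcongr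
  have hsum := norm_add_le_of_le hminor hmajor
  rw [sub_add_sub_cancel, ← mul_add] at hsum
  refine hsum.trans ?_
  gcongr
  linarith

theorem mul_pow_four_le_exp_half {x : ℝ} (hx : 40 ≤ x) : 40 * x ^ 4 ≤ rexp (x / 2) := by
  have hfive : 140 ≤ rexp 5 := by
    rw [show (5 : ℝ) = (5 : ℕ) * 1 by norm_num, Real.exp_nat_mul]
    calc (140 : ℝ) ≤ 2.7 ^ 5 := by norm_num
      _ ≤ rexp 1 ^ 5 := by
        gcongr
        linarith [exp_one_gt_d9]
  have heighth : 2.6 * x ≤ rexp (x / 8) := by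
    rw [show x / 8 = 5 + (x / 8 - 5) by ring, Real.exp_add]
    nlinarith [add_one_le_exp (x / 8 - 5)]
  calc 40 * x ^ 4 ≤ (2.6 * x) ^ 4 := by
        rw [mul_pow]
        gcongr
        norm_num
    _ ≤ rexp (x / 8) ^ 4 := by gcongr
    _ = rexp (x / 2) := by
      rw [← Real.exp_nat_mul]
      ring_nf

theorem mul_exp_le_div_sq {x : ℝ} (hx : 40 ≤ x) :
    19 * x * rexp (3 / 2 * x) ≤
      1 / (20 * x ^ 2) * (rexp (2 * x) * √(π / x) * (1 - 1 / (2 * x))) := by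
  have hx0 : 0 < x := by linarith
  have hroot : 10 / x ≤ √(π / x) := by
    refine Real.le_sqrt_of_sq_le ?_
    rw [div_pow, div_le_div_iff₀ (by positivity) hx0]
    nlinarith [pi_gt_three]
  have hfactor : 0.98 ≤ 1 - 1 / (2 * x) := by
    have : 1 / (2 * x) ≤ 1 / 80 := by gcongr; linarith
    linarith
  calc 19 * x * rexp (3 / 2 * x)
      ≤ 1 / (20 * x ^ 2) * (rexp (3 / 2 * x) * (40 * x ^ 4) * (10 / x) * 0.98) := by
        field_simp
        norm_num
    _ ≤ 1 / (20 * x ^ 2) * (rexp (3 / 2 * x) * rexp (x / 2) * √(π / x) * (1 - 1 / (2 * x))) := by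
        gcongr
        exact mul_pow_four_le_exp_half hx
    _ = 1 / (20 * x ^ 2) * (rexp (2 * x) * √(π / x) * (1 - 1 / (2 * x))) := by
        rw [← Real.exp_add]
        ring_nf

/-- The main term of the Hardy-Ramanujan-Rademacher formula, without its constant factor, in the
variable `x = √(π² / 6 (n - 1 / 24))`. -/
noncomputable def partitionMainTerm (x : ℝ) : ℝ := (2 * x - 1) * rexp (2 * x) / x ^ 3

theorem circleMethod_mainTerm_eq {x : ℝ} (hx : 0 < x) :
    π ^ 2 / 6 / x / (2 * π) * (√(π ^ 2 / 6 / x / (2 * π)) *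
      (rexp (2 * x) * √(π / x) * (1 - 1 / (2 * x)))) =
    π ^ 2 / (24 * √12) * partitionMainTerm x := by
  have hroots : √(π ^ 2 / 6 / x / (2 * π)) * √(π / x) = π / (√12 * x) := by
    rw [← Real.sqrt_mul (by positivity),
      show π ^ 2 / 6 / x / (2 * π) * (π / x) = (π / x) ^ 2 / 12 by field_simp; norm_num,
      Real.sqrt_div (by positivity), Real.sqrt_sq (by positivity), div_div, mul_comm x]
  calc _ = π ^ 2 / 6 / x / (2 * π) * ((√(π ^ 2 / 6 / x / (2 * π)) * √(π / x)) *
        (rexp (2 * x) * (1 - 1 / (2 * x)))) := by ring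
    _ = π ^ 2 / (24 * √12) * partitionMainTerm x := by
      rw [hroots, partitionMainTerm]
      field_simp
      ring

theorem abs_partitionCount_sub_le {n : ℕ} {x : ℝ} (hx40 : 40 ≤ x)
    (hx : x ^ 2 = π ^ 2 / 6 * (n - 1 / 24)) :
    |partitionCount n - π ^ 2 / (24 * √12) * partitionMainTerm x| ≤
      1 / (20 * x ^ 2) * (π ^ 2 / (24 * √12) * partitionMainTerm x) := by
  have hx0 : 0 < x := by linarith
  obtain ⟨α, hαx⟩ : ∃ α, α = π ^ 2 / 6 / x := ⟨_, rfl⟩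
  have hα : 0 < α := hαx ▸ by positivity
  have hintegral := norm_integral_circleIntegrand_sub_le_of_le (n := n) hα
    (by rw [hαx]; field_simp) (by rw [hαx, div_mul_eq_mul_div, ← hx]; field_simp) hx40
  have hcauchy : (partitionCount n : ℂ) =
      α / (2 * π) * ∫ y in -(π / α)..π / α, circleIntegrand n α y := partitionCount_eq_integral n hα
  rw [← circleMethod_mainTerm_eq hx0, ← hαx, ← Real.norm_eq_abs, ← norm_real, ofReal_sub,
    ofReal_natCast, hcauchy, ofReal_mul, ofReal_mul √(α / (2 * π)), ofReal_div, ofReal_mul 2,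
    ofReal_ofNat, ← mul_sub, norm_mul]
  calc _ ≤ ‖(α / (2 * π) : ℂ)‖ * (√(α / (2 * π)) * (1 / (20 * x ^ 2) *
        (rexp (2 * x) * √(π / x) * (1 - 1 / (2 * x))))) := by
        gcongr
        exact hintegral.trans
          (mul_le_mul_of_nonneg_left (mul_exp_le_div_sq hx40) (Real.sqrt_nonneg _))
    _ = _ := by
      rw [← ofReal_ofNat, ← ofReal_mul, ← ofReal_div, norm_real,
        Real.norm_of_nonneg (by positivity)]
      ring

end CircleMethod

section MainTerm

open Real

theorem partitionMainTerm_pos {x : ℝ} (hx : 1 / 2 < x) : 0 < partitionMainTerm x := by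
  have : 0 < x := by linarith
  have hlin : 0 < 2 * x - 1 := by linarith
  rw [partitionMainTerm]
  positivity

theorem partitionMainTerm_add_le {x δ : ℝ} (hx : 1 / 2 < x) (hδ : 0 ≤ δ) :
    partitionMainTerm (x + δ) ≤
      partitionMainTerm x * rexp (2 * δ + 2 * δ / (2 * x - 1) - 3 * (δ / (x + δ))) := by
  have : 0 < x := by linarith
  have hlin : 0 < 2 * x - 1 := by linarith
  have hlinear : 2 * (x + δ) - 1 ≤ (2 * x - 1) * rexp (2 * δ / (2 * x - 1)) :=
    calc 2 * (x + δ) - 1 = (2 * x - 1) * (2 * δ / (2 * x - 1) + 1) := by field_simp; ring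
      _ ≤ (2 * x - 1) * rexp (2 * δ / (2 * x - 1)) := by gcongr; exact add_one_le_exp _
  have hcube : 1 / (x + δ) ^ 3 ≤ 1 / x ^ 3 * rexp (-(3 * (δ / (x + δ)))) :=
    calc 1 / (x + δ) ^ 3 = 1 / x ^ 3 * (1 - δ / (x + δ)) ^ 3 := by
          rw [one_sub_div (by positivity), add_sub_cancel_right]
          field_simp
      _ ≤ 1 / x ^ 3 * rexp (-(δ / (x + δ))) ^ 3 := by
          gcongr
          · rw [sub_nonneg, div_le_one (by positivity)]
            linarith
          · exact one_sub_le_exp_neg _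
      _ = 1 / x ^ 3 * rexp (-(3 * (δ / (x + δ)))) := by
          rw [← Real.exp_nat_mul]
          push_cast
          ring_nf
  calc partitionMainTerm (x + δ) = (2 * (x + δ) - 1) * (1 / (x + δ) ^ 3) * rexp (2 * (x + δ)) := by
        rw [partitionMainTerm]
        ring
    _ ≤ (2 * x - 1) * rexp (2 * δ / (2 * x - 1)) * (1 / x ^ 3 * rexp (-(3 * (δ / (x + δ))))) *
          rexp (2 * (x + δ)) := by
        gcongr
    _ = _ := by
        rw [partitionMainTerm, sub_eq_add_neg (_ + _), Real.exp_add, Real.exp_add, mul_add,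
          Real.exp_add]
        ring

theorem mainTerm_exponent_le {A x δ : ℝ} (hA : 1.6449 ≤ A) (hA' : A ≤ 1.645) (hx : 40 ≤ x)
    (hδ : 0 ≤ δ) (hxδ : (x + δ) ^ 2 = x ^ 2 + A) :
    2 * δ + 2 * δ / (2 * x - 1) - 3 * (δ / (x + δ)) + 0.11 / x ^ 2 ≤ A / x - 1.5 / x ^ 2 := by
  have hx0 : 0 < x := by linarith
  have hδ' : δ ≤ 0.001 * x := by nlinarith
  have hupper : 2 * δ ≤ A / x := by
    rw [le_div_iff₀ hx0]
    nlinarith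
  have hlower : 0.822 / x ≤ δ := by
    rw [div_le_iff₀ hx0]
    nlinarith
  have hlinear : 2 * δ / (2 * x - 1) ≤ 1.013 * (δ / x) := by
    rw [← mul_div_assoc, div_le_div_iff₀ (by linarith) hx0]
    nlinarith
  have hcube : 2.997 * (δ / x) ≤ 3 * (δ / (x + δ)) := by
    rw [← mul_div_assoc, ← mul_div_assoc, div_le_div_iff₀ hx0 (by positivity)]
    nlinarith
  have hquotient : 0.822 / x ^ 2 ≤ δ / x := by
    rw [sq, ← div_div]
    gcongr
  linarith [show 0.11 / x ^ 2 + 1.5 / x ^ 2 ≤ 1.984 * (0.822 / x ^ 2) by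
    rw [← add_div, ← mul_div_assoc]; gcongr; norm_num]

theorem exp_le_one_add_add_mul_sq {u : ℝ} (hu : 0 ≤ u) (hu' : u ≤ 1 / 24) :
    rexp u ≤ 1 + u + 0.51 * u ^ 2 := by
  have hcubic := Real.exp_bound' hu (by linarith) (n := 3) (by norm_num)
  norm_num [Finset.sum_range_succ, Nat.factorial] at hcubic
  nlinarith [sq_nonneg u]

theorem mul_one_sub_le_div_sqrt {A x : ℝ} (hA : 0 ≤ A) (hx : 0 < x) :
    A / x * (1 - A / x ^ 2) ≤ A / √(x ^ 2 + 2 * A) := by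
  have hroot : √(x ^ 2 + 2 * A) ≤ x * (1 + A / x ^ 2) := by
    refine Real.sqrt_le_iff.mpr ⟨by positivity, ?_⟩
    rw [mul_pow, add_sq, mul_add, mul_add, one_pow]
    field_simp
    nlinarith [sq_nonneg A, pow_pos hx 2]
  calc A / x * (1 - A / x ^ 2) ≤ A / x * (1 / (1 + A / x ^ 2)) := by
        gcongr
        rw [le_div_iff₀ (by positivity)]
        nlinarith [sq_nonneg (A / x ^ 2)]
    _ = A / (x * (1 + A / x ^ 2)) := by rw [div_mul_div_comm, mul_one]
    _ ≤ A / √(x ^ 2 + 2 * A) := by gcongr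

-- Here `A = π² / 6` and `x² = A (n - 1 / 24)`, so that `x² + 25 / 24 A = A (n + 1)`.
theorem exp_lt_one_add_div_sqrt {A x : ℝ} (hA : 1.6449 ≤ A) (hA' : A ≤ 1.645) (hx : 40 ≤ x) :
    rexp (A / x - 1.5 / x ^ 2) < 1 + A / √(x ^ 2 + 25 / 24 * A) := by
  have hx0 : 0 < x := by linarith
  have hlower := mul_one_sub_le_div_sqrt (A := 25 / 48 * A) (by linarith) hx0
  obtain ⟨t, ht⟩ : ∃ t, t = 1 / x := ⟨_, rfl⟩
  have ht0 : 0 < t := by rw [ht]; positivity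
  have ht1 : t ≤ 1 / 40 := by rw [ht]; gcongr
  have hlower' : A * t - 25 / 48 * A ^ 2 * t ^ 3 ≤ A / √(x ^ 2 + 25 / 24 * A) := by
    rw [show 25 / 24 * A = 2 * (25 / 48 * A) by ring]
    have : 25 / 48 * (A * t - 25 / 48 * A ^ 2 * t ^ 3) ≤
        25 / 48 * (A / √(x ^ 2 + 2 * (25 / 48 * A))) := by
      rw [ht]
      convert hlower using 1 <;> ring
    linarith
  have hu : A / x - 1.5 / x ^ 2 = A * t - 1.5 * t ^ 2 := by rw [ht]; ring
  have hexp := exp_le_one_add_add_mul_sq (u := A * t - 1.5 * t ^ 2) (by nlinarith) (by nlinarith)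
  rw [hu]
  have hsq : (A * t - 1.5 * t ^ 2) ^ 2 ≤ (1.645 * t) ^ 2 := by
    gcongr
    · nlinarith
    · nlinarith
  have hA2 : A ^ 2 ≤ 1.645 ^ 2 := by gcongr
  have hcube : A ^ 2 * t ^ 3 ≤ 1.645 ^ 2 * (t ^ 2 * (1 / 40)) := by
    rw [pow_succ t 2]
    gcongr
  nlinarith [pow_pos ht0 2]

theorem partitionMainTerm_add_lt {A x δ : ℝ} (hA : 1.6449 ≤ A) (hA' : A ≤ 1.645)
    (hx : 40 ≤ x) (hδ : 0 ≤ δ) (hxδ : (x + δ) ^ 2 = x ^ 2 + A) :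
    (1 + 1 / (20 * (x + δ) ^ 2)) * partitionMainTerm (x + δ) <
      (1 - 1 / (20 * x ^ 2)) * partitionMainTerm x * (1 + A / √(x ^ 2 + 25 / 24 * A)) := by
  have : 0 < x := by linarith
  have hM := partitionMainTerm_pos (x := x) (by linarith)
  have hM' := partitionMainTerm_pos (x := x + δ) (by linarith)
  have hupper : 1 + 1 / (20 * (x + δ) ^ 2) ≤ rexp (0.05 / x ^ 2) :=
    calc 1 + 1 / (20 * (x + δ) ^ 2) ≤ 0.05 / x ^ 2 + 1 := by
          rw [show 0.05 / x ^ 2 = 1 / (20 * x ^ 2) by field_simp; norm_num, add_comm]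
          gcongr
          linarith
      _ ≤ rexp (0.05 / x ^ 2) := add_one_le_exp _
  have hlower : rexp (-(0.06 / x ^ 2)) ≤ 1 - 1 / (20 * x ^ 2) := by
    obtain ⟨s, hs⟩ : ∃ s, s = 1 / x ^ 2 := ⟨_, rfl⟩
    have hs0 : 0 < s := by rw [hs]; positivity
    have hs1 : s ≤ 1 / 40 ^ 2 := by rw [hs]; gcongr
    rw [show 0.06 / x ^ 2 = 0.06 * s by rw [hs]; ring,
      show 1 / (20 * x ^ 2) = 0.05 * s by rw [hs]; field_simp; norm_num, Real.exp_neg,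
      inv_le_iff_one_le_mul₀ (Real.exp_pos _)]
    nlinarith [add_one_le_exp (0.06 * s)]
  calc (1 + 1 / (20 * (x + δ) ^ 2)) * partitionMainTerm (x + δ)
      ≤ rexp (0.05 / x ^ 2) * (partitionMainTerm x *
          rexp (2 * δ + 2 * δ / (2 * x - 1) - 3 * (δ / (x + δ)))) := by
        gcongr
        exact partitionMainTerm_add_le (by linarith) hδ
    _ = rexp (-(0.06 / x ^ 2)) * partitionMainTerm x *
          rexp (2 * δ + 2 * δ / (2 * x - 1) - 3 * (δ / (x + δ)) + 0.11 / x ^ 2) := by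
        rw [mul_left_comm, ← Real.exp_add, mul_comm (rexp _), mul_assoc, ← Real.exp_add]
        ring_nf
    _ < rexp (-(0.06 / x ^ 2)) * partitionMainTerm x * (1 + A / √(x ^ 2 + 25 / 24 * A)) := by
        gcongr
        exact (Real.exp_le_exp.mpr (mainTerm_exponent_le hA hA' hx hδ hxδ)).trans_lt
          (exp_lt_one_add_div_sqrt hA hA' hx)
    _ ≤ _ := by gcongr

theorem pi_sq_div_six_div_sqrt (m : ℝ) :
    π ^ 2 / 6 / √(π ^ 2 / 6 * m) = √6 * π / 6 / √m := by
  rw [Real.sqrt_mul (by positivity), ← div_div, Real.div_sqrt, Real.sqrt_div (sq_nonneg π),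
    Real.sqrt_sq pi_pos.le, mul_comm √6, mul_div_assoc, Real.sqrt_div_self, div_eq_mul_inv π]

theorem partitionCount_succ_lt_of_le {n : ℕ} (hn : 1000 ≤ n) :
    partitionCount (n + 1) < partitionCount n * (1 + √6 * π / 6 / √(n + 1)) := by
  have hn' : (1000 : ℝ) ≤ n := by exact_mod_cast hn
  obtain ⟨A, hAπ⟩ : ∃ A, A = π ^ 2 / 6 := ⟨_, rfl⟩
  have hA : 1.6449 ≤ A := by rw [hAπ]; nlinarith [pi_gt_d6]
  have hA' : A ≤ 1.645 := by rw [hAπ]; nlinarith [pi_lt_d6, pi_pos]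
  obtain ⟨x, hx⟩ : ∃ x, x = √(A * (n - 1 / 24)) := ⟨_, rfl⟩
  obtain ⟨δ, hδ⟩ : ∃ δ, x + δ = √(A * (n + 1 - 1 / 24)) := ⟨_, add_sub_cancel _ _⟩
  have hx2 : x ^ 2 = A * (n - 1 / 24) := by rw [hx, Real.sq_sqrt (by nlinarith)]
  have hδ2 : (x + δ) ^ 2 = A * (n + 1 - 1 / 24) := by rw [hδ, Real.sq_sqrt (by nlinarith)]
  have hx40 : 40 ≤ x := by rw [hx]; exact Real.le_sqrt_of_sq_le (by nlinarith)
  have hδ0 : 0 ≤ δ := by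
    have : x ≤ x + δ := by rw [hδ, hx]; gcongr; linarith
    linarith
  have hroot : A / √(x ^ 2 + 25 / 24 * A) = √6 * π / 6 / √(n + 1) := by
    rw [← pi_sq_div_six_div_sqrt, ← hAπ, hx2]
    ring_nf
  have hcompare := partitionMainTerm_add_lt hA hA' hx40 hδ0 (by rw [hx2, hδ2]; ring)
  rw [hroot] at hcompare
  have hlower := abs_le.mp (abs_partitionCount_sub_le (n := n) hx40 (hAπ ▸ hx2))
  have hupper := abs_le.mp (abs_partitionCount_sub_le (n := n + 1) (x := x + δ) (by linarith)
    (by rw [hδ2, hAπ]; push_cast; ring))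
  obtain ⟨C, hC⟩ : ∃ C, C = π ^ 2 / (24 * √12) := ⟨_, rfl⟩
  have hC0 : 0 < C := by rw [hC]; positivity
  rw [← hC] at hlower hupper
  calc (partitionCount (n + 1) : ℝ)
      ≤ C * ((1 + 1 / (20 * (x + δ) ^ 2)) * partitionMainTerm (x + δ)) := by linarith [hupper.2]
    _ < C * ((1 - 1 / (20 * x ^ 2)) * partitionMainTerm x * (1 + √6 * π / 6 / √(n + 1))) := by
        gcongr
    _ = (1 - 1 / (20 * x ^ 2)) * (C * partitionMainTerm x) * (1 + √6 * π / 6 / √(n + 1)) := by ring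
    _ ≤ partitionCount n * (1 + √6 * π / 6 / √(n + 1)) := by
        gcongr
        linarith [hlower.1]

end MainTerm

section ExponentialBound

open Complex Real

theorem partitionCount_mul_exp_le_norm (n : ℕ) {α : ℝ} (hα : 0 < α) :
    partitionCount n * rexp (-(α * n)) ≤ ‖(eulerFunction (cexp (-α)))⁻¹‖ := by
  have hsum := Complex.reCLM.hasSum
    (hasSum_partitionCount_mul_pow (norm_cexp_neg_lt_one (z := α) (by simpa using hα)))
  have hterm (k : ℕ) : reCLM ((partitionCount k : ℂ) * cexp (-α) ^ k) =
      partitionCount k * rexp (-(α * k)) := by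
    rw [reCLM_apply, ← Complex.exp_nat_mul, ← Complex.ofReal_natCast, re_ofReal_mul,
      ← Complex.ofReal_neg, ← Complex.ofReal_natCast, ← Complex.ofReal_mul, Complex.exp_ofReal_re]
    ring_nf
  simp only [hterm] at hsum
  exact (le_hasSum hsum n fun k _ ↦ by positivity).trans (re_le_norm _)

theorem norm_eulerFunction_inv_cexp_neg_le {α : ℝ} (hα : 0 < α) (hα1 : α ≤ 1) :
    ‖(eulerFunction (cexp (-α)))⁻¹‖ ≤ rexp (π ^ 2 / (6 * α)) := by
  have hdual : ‖cexp (-(4 * π ^ 2 / α))‖ ≤ 1 / 4 := by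
    have hsix : 6 ≤ 4 * π ^ 2 / α := by
      rw [le_div_iff₀ hα]
      nlinarith [pi_gt_three]
    rw [← ofReal_ofNat, ← ofReal_pow, ← ofReal_mul, ← ofReal_div, ← ofReal_neg, norm_exp_ofReal,
      Real.exp_neg, inv_le_comm₀ (Real.exp_pos _) (by norm_num)]
    linarith [Real.add_one_le_exp (4 * π ^ 2 / α)]
  have hdual_inv : ‖(eulerFunction (cexp (-(4 * π ^ 2 / α))))⁻¹‖ ≤ 3 / 2 := by
    have hsub := (norm_eulerFunction_inv_sub_one_le hdual).trans
      (mul_le_mul_of_nonneg_left hdual zero_le_two)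
    have htriangle := norm_le_norm_sub_add
      (eulerFunction (cexp (-(4 * π ^ 2 / α))))⁻¹ 1
    rw [norm_one] at htriangle
    linarith
  have hsqrt : ‖Complex.sqrt (α / (2 * π))‖ ≤ 2 / 3 := by
    rw [← abs_of_nonneg (norm_nonneg _), ← sq_le_sq₀ (abs_nonneg _) (by norm_num), sq_abs,
      norm_sqrt_sq, norm_div, norm_mul, norm_real, norm_real, Real.norm_of_nonneg hα.le,
      Real.norm_of_nonneg pi_pos.le, Complex.norm_two, div_le_iff₀ (by positivity)]
    linarith [pi_gt_three]
  have hexp : ‖cexp (π ^ 2 / 6 / α - α / 24)‖ ≤ rexp (π ^ 2 / (6 * α)) := by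
    have hre : (π ^ 2 / 6 / α - α / 24 : ℂ) = (π ^ 2 / 6 / α - α / 24 : ℝ) := by push_cast; rfl
    rw [hre, norm_exp_ofReal, div_div]
    gcongr
    linarith
  rw [eulerFunction_cexp_neg_inv (by simpa using hα), norm_mul, norm_mul]
  calc ‖Complex.sqrt (α / (2 * π))‖ * ‖cexp (π ^ 2 / 6 / α - α / 24)‖ *
        ‖(eulerFunction (cexp (-(4 * π ^ 2 / α))))⁻¹‖
      ≤ 2 / 3 * rexp (π ^ 2 / (6 * α)) * (3 / 2) := by gcongr
    _ = rexp (π ^ 2 / (6 * α)) := by ring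

theorem partitionCount_le_exp (n : ℕ) {α : ℝ} (hα : 0 < α) (hα1 : α ≤ 1) :
    partitionCount n ≤ rexp (π ^ 2 / (6 * α) + α * n) := by
  calc (partitionCount n : ℝ) = partitionCount n * rexp (-(α * n)) * rexp (α * n) := by
        rw [mul_assoc, ← Real.exp_add, neg_add_cancel, Real.exp_zero, mul_one]
    _ ≤ rexp (π ^ 2 / (6 * α)) * rexp (α * n) := by
        gcongr
        exact (partitionCount_mul_exp_le_norm n hα).trans
          (norm_eulerFunction_inv_cexp_neg_le hα hα1)
    _ = rexp (π ^ 2 / (6 * α) + α * n) := (Real.exp_add _ _).symm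

theorem partitionCount_lt_two_pow {n : ℕ} (hn : n ≤ 1000) : partitionCount n < 2 ^ 128 := by
  have hexp : (partitionCount n : ℝ) < 2 ^ 128 := by
    calc (partitionCount n : ℝ) ≤ rexp (π ^ 2 / (6 * (1 / 25)) + 1 / 25 * n) :=
          partitionCount_le_exp n (by norm_num) (by norm_num)
      _ ≤ rexp (82 * 1) := by
          gcongr
          have hn' : (n : ℝ) ≤ 1000 := mod_cast hn
          have hpi : π ^ 2 ≤ 10 := by nlinarith [pi_lt_d2, pi_pos]
          norm_num
          linarith
      _ = rexp 1 ^ 82 := Real.exp_nat_mul 1 82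
      _ < 2.7182818286 ^ 82 := by
          gcongr
          exact exp_one_lt_d9
      _ < 2 ^ 128 := by norm_num
  exact_mod_cast hexp

end ExponentialBound

section KroneckerSubstitution

open Finset PowerSeries

open PowerSeries.WithPiTopology in
theorem mk_partitionCount_mul_pentagonalSeries (R : Type*) [CommRing R] :
    (PowerSeries.mk fun n ↦ (partitionCount n : R)) * pentagonalSeries R = 1 := by
  let : TopologicalSpace R := ⊥
  have : DiscreteTopology R := ⟨rfl⟩
  have hprod := (Nat.Partition.hasProd_powerSeriesMk_card_restricted R (fun _ ↦ True)).mul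
    (hasProd_one_sub_X_pow R)
  simp only [Nat.Partition.restricted, implies_true, filter_true, card_univ, if_true] at hprod
  refine hprod.unique ?_
  convert hasProd_one using 2 with i
  simp_rw [pow_mul]
  exact tsum_pow_mul_one_sub_of_constantCoeff_eq_zero (by simp)

/-- The sum of the first `m` pairs of terms of the pentagonal series at `x`, truncating
`∏ (1 - xᵏ)`. -/
def pentagonalSum {R : Type*} [Ring R] (x : R) (m : ℕ) : R :=
  ∑ k ∈ range m, (-1) ^ k * (x ^ pentagonal (-k) - x ^ pentagonal (k + 1))

theorem map_pentagonalSum {R S : Type*} [Ring R] [Ring S] (f : R →+* S) (x : R) (m : ℕ) :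
    f (pentagonalSum x m) = pentagonalSum (f x) m := by
  simp [pentagonalSum]

theorem pentagonal_neg_lt_pentagonal_succ {k l : ℕ} (h : k ≤ l) :
    pentagonal (-k) < pentagonal (l + 1) := by
  have hk := two_mul_natCast_pentagonal_neg k
  have hl := two_mul_natCast_pentagonal (l + 1)
  zify at h ⊢
  nlinarith

theorem pentagonal_neg_natCast_mono : Monotone fun k : ℕ ↦ pentagonal (-k) := fun k l h ↦
  pentagonal_strictAntiOn.antitoneOn (by simp) (by simp) (by simpa using h)

open PowerSeries.WithPiTopology in
theorem X_pow_dvd_pentagonalSeries_sub (R : Type*) [CommRing R] {N m : ℕ}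
    (hN : N ≤ pentagonal (-m)) :
    (X : R⟦X⟧) ^ N ∣ pentagonalSeries R - pentagonalSum X m := by
  let : TopologicalSpace R := ⊥
  have : DiscreteTopology R := ⟨rfl⟩
  rw [X_pow_dvd_iff]
  intro d hd
  have hseries := (hasSum_pow_pentagonal_sub_pentagonalSeries R).map (coeff (R := R) d)
    (continuous_coeff R d)
  have htail (k : ℕ) (hk : k ∉ range m) :
      coeff d ((-1) ^ k * ((X : R⟦X⟧) ^ pentagonal (-k) - X ^ pentagonal (k + 1))) = 0 := by
    rw [mem_range, not_lt] at hk
    have hneg : d < pentagonal (-k) := hd.trans_le (hN.trans (pentagonal_neg_natCast_mono hk))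
    have hsucc : d < pentagonal (k + 1) := hd.trans_le
      (hN.trans (pentagonal_neg_lt_pentagonal_succ hk).le)
    refine X_pow_dvd_iff.mp (Dvd.dvd.mul_left (dvd_sub ?_ ?_) _) d d.lt_succ_self
    exacts [pow_dvd_pow _ hneg, pow_dvd_pow _ hsucc]
  rw [map_sub, hseries.unique (hasSum_sum_of_ne_finset_zero (L := .unconditional _) htail),
    pentagonalSum, map_sum, sub_eq_zero]
  rfl

theorem pow_dvd_sum_partitionCount_mul {R : Type*} [CommRing R] (b : R) {N m : ℕ}
    (hN : N ≤ pentagonal (-m)) :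
    b ^ N ∣ (∑ k ∈ range N, partitionCount k * b ^ k) * pentagonalSum b m - 1 := by
  obtain ⟨F, hF⟩ : ∃ F : R⟦X⟧, F = .mk fun n ↦ (partitionCount n : R) := ⟨_, rfl⟩
  have htrunc : (X : R⟦X⟧) ^ N ∣ F - ((trunc N F : Polynomial R) : R⟦X⟧) := by
    rw [X_pow_dvd_iff]
    intro d hd
    simp [coeff_trunc, hd]
  have hcoe : ((pentagonalSum Polynomial.X m : Polynomial R) : R⟦X⟧) = pentagonalSum X m := by
    simpa using map_pentagonalSum (Polynomial.coeToPowerSeries.ringHom (R := R)) Polynomial.X m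
  have hseries : (X : R⟦X⟧) ^ N ∣
      ((trunc N F * pentagonalSum Polynomial.X m - 1 : Polynomial R) : R⟦X⟧) := by
    have hsplit : ((trunc N F * pentagonalSum Polynomial.X m - 1 : Polynomial R) : R⟦X⟧) =
        -((F - ((trunc N F : Polynomial R) : R⟦X⟧)) * pentagonalSum X m +
          F * (pentagonalSeries R - pentagonalSum X m)) := by
      rw [Polynomial.coe_sub, Polynomial.coe_mul, hcoe, Polynomial.coe_one,
        ← mk_partitionCount_mul_pentagonalSeries R, ← hF]
      ring
    rw [hsplit, dvd_neg]
    exact (htrunc.mul_right _).add ((X_pow_dvd_pentagonalSeries_sub R hN).mul_left F)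
  have hpoly : (Polynomial.X : Polynomial R) ^ N ∣
      trunc N F * pentagonalSum Polynomial.X m - 1 := by
    rw [Polynomial.X_pow_dvd_iff]
    intro d hd
    rw [← Polynomial.coeff_coe]
    exact X_pow_dvd_iff.mp hseries d hd
  have heval := map_dvd (Polynomial.evalRingHom b) hpoly
  rw [map_sub, map_mul, map_pentagonalSum, map_pow] at heval
  simpa [trunc_apply, Polynomial.eval_finsetSum, hF] using heval

theorem sum_mul_pow_lt {b : ℕ} {a : ℕ → ℕ} {N : ℕ} (ha : ∀ k < N, a k < b) :
    ∑ k ∈ range N, a k * b ^ k < b ^ N := by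
  induction N with
  | zero => simp
  | succ N ih =>
    calc ∑ k ∈ range (N + 1), a k * b ^ k < b ^ N + a N * b ^ N := by
          rw [sum_range_succ]
          gcongr
          exact ih fun k hk ↦ ha k (by lia)
      _ = (a N + 1) * b ^ N := by ring
      _ ≤ b * b ^ N := by
          gcongr
          exact ha N N.lt_succ_self
      _ = b ^ (N + 1) := (pow_succ' b N).symm

theorem sum_mul_pow_div_pow_mod {b : ℕ} {a : ℕ → ℕ} {N n : ℕ} (ha : ∀ k < N, a k < b)
    (hn : n < N) : (∑ k ∈ range N, a k * b ^ k) / b ^ n % b = a n := by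
  induction n generalizing a N with
  | zero =>
    obtain ⟨N, rfl⟩ := Nat.exists_eq_succ_of_ne_zero hn.ne'
    simp_rw [sum_range_succ', pow_succ, ← mul_assoc, ← sum_mul]
    simp [Nat.mod_eq_of_lt (ha 0 hn)]
  | succ n ih =>
    obtain ⟨N, rfl⟩ := Nat.exists_eq_succ_of_ne_zero (Nat.ne_zero_of_lt hn)
    have ha0 := ha 0 N.succ_pos
    simp_rw [sum_range_succ', pow_succ', mul_left_comm, ← mul_sum, ← Nat.div_div_eq_div_mul]
    rw [pow_zero, mul_one, Nat.mul_add_div (by lia), Nat.div_eq_of_lt ha0, add_zero]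
    exact ih (fun k hk ↦ ha (k + 1) (by lia)) (by lia)

theorem sum_partitionCount_mul_pow_eq_of_modEq {b N m s : ℕ} (hN : N ≤ pentagonal (-m))
    (hb : ∀ k < N, partitionCount k < b) (hs : s < b ^ N)
    (hinv : s * pentagonalSum (b : ℤ) m ≡ 1 [ZMOD b ^ N]) :
    ∑ k ∈ range N, partitionCount k * b ^ k = s := by
  refine Nat.ModEq.eq_of_lt_of_lt (Int.natCast_modEq_iff.mp ?_) (sum_mul_pow_lt hb) hs
  obtain ⟨P, hP⟩ : ∃ P : ℤ, P = ∑ k ∈ range N, partitionCount k * (b : ℤ) ^ k := ⟨_, rfl⟩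
  have hP_inv : P * pentagonalSum (b : ℤ) m ≡ 1 [ZMOD b ^ N] :=
    (Int.modEq_iff_dvd.mpr (hP ▸ pow_dvd_sum_partitionCount_mul (b : ℤ) hN)).symm
  push_cast [← hP]
  calc P = P * 1 := (mul_one P).symm
    _ ≡ P * (s * pentagonalSum (b : ℤ) m) [ZMOD b ^ N] := hinv.symm.mul_left P
    _ = P * pentagonalSum (b : ℤ) m * s := by ring
    _ ≡ 1 * s [ZMOD b ^ N] := hP_inv.mul_right s
    _ = s := one_mul _

/-- The integer `pentagonalSum b m` with its powers taken in `ℕ`, where the kernel has fast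
arithmetic. -/
def natPentagonalSum (b m : ℕ) : ℤ :=
  ∑ k ∈ range m, (-1) ^ k * ((b ^ pentagonal (-k) : ℕ) - (b ^ pentagonal (k + 1) : ℕ))

theorem natPentagonalSum_eq (b m : ℕ) : natPentagonalSum b m = pentagonalSum (b : ℤ) m := by
  simp [natPentagonalSum, pentagonalSum]

/-- Newton iteration for the inverse of `a` modulo `M`, starting from `1`. -/
def newtonInverse (a M : ℤ) : ℕ → ℕ
  | 0 => 1
  | k + 1 => (newtonInverse a M k * (2 - newtonInverse a M k * a) % M).toNat

/-- An integer whose digits in base `2 ^ 128` are the partition numbers `p(0), …, p(1000)`. -/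
@[irreducible]
def packedPartitionCounts : ℕ :=
  newtonInverse (natPentagonalSum (2 ^ 128) 26) ((2 ^ 128) ^ 1001 : ℕ) 10

theorem packedPartitionCounts_lt : packedPartitionCounts < (2 ^ 128) ^ 1001 := by
  decide +kernel

theorem packedPartitionCounts_mul_natPentagonalSum_modEq :
    packedPartitionCounts * natPentagonalSum (2 ^ 128) 26 ≡ 1 [ZMOD ((2 ^ 128) ^ 1001 : ℕ)] := by
  decide +kernel

/-- The base `2 ^ 128` digits of `packedPartitionCounts`, a computable form of the partition
numbers up to `p(1000)`. -/
@[irreducible]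
def computedPartitionCount (n : ℕ) : ℕ :=
  packedPartitionCounts / (2 ^ 128) ^ n % 2 ^ 128

theorem computedPartitionCount_eq {n : ℕ} (hn : n < 1001) :
    computedPartitionCount n = partitionCount n := by
  have hlt (k : ℕ) (hk : k < 1001) : partitionCount k < 2 ^ 128 :=
    partitionCount_lt_two_pow (Nat.le_of_lt_succ hk)
  have hinv := packedPartitionCounts_mul_natPentagonalSum_modEq
  rw [natPentagonalSum_eq, Nat.cast_pow] at hinv
  rw [computedPartitionCount, ← sum_partitionCount_mul_pow_eq_of_modEq (m := 26) (by decide) hlt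
    packedPartitionCounts_lt hinv,
    sum_mul_pow_div_pow_mod hlt hn]

theorem computedPartitionCount_sub_sq_lt : ∀ n < 1000, 12 ≤ n →
    (60000 * (n + 1) * (computedPartitionCount (n + 1) - computedPartitionCount n) ^ 2 : ℤ) <
      98696 * computedPartitionCount n ^ 2 := by
  decide +kernel

open Real in
theorem partitionCount_succ_lt_of_lt {n : ℕ} (hn : 12 ≤ n) (hn' : n < 1000) :
    (partitionCount (n + 1) : ℝ) < partitionCount n * (1 + √6 * π / 6 / √(n + 1)) := by
  have hcheck := computedPartitionCount_sub_sq_lt n hn' hn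
  rw [computedPartitionCount_eq (Nat.lt_succ_of_lt hn'),
    computedPartitionCount_eq (Nat.succ_lt_succ hn')] at hcheck
  have hsq : (60000 * (n + 1) * (partitionCount (n + 1) - partitionCount n) ^ 2 : ℝ) <
      98696 * partitionCount n ^ 2 := by exact_mod_cast hcheck
  have hpi : 9.8696 ≤ π ^ 2 := by nlinarith [pi_gt_d6]
  have hlt : (partitionCount (n + 1) - partitionCount n) * √(n + 1) <
      partitionCount n * (√6 * π / 6) := by
    refine lt_of_pow_lt_pow_left₀ 2 (by positivity) ?_
    rw [mul_pow, mul_pow, div_pow, mul_pow, sq_sqrt (by positivity), sq_sqrt (by norm_num)]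
    nlinarith [mul_le_mul_of_nonneg_left hpi (sq_nonneg (partitionCount n : ℝ))]
  rw [← lt_div_iff₀ (by positivity), mul_div_assoc] at hlt
  linarith

end KroneckerSubstitution

open Real in
theorem stmt_17 (p : ℕ → ℕ) (hp : ∀ n, p n = Fintype.card (Nat.Partition n))
    (n : ℕ) (hn : 12 ≤ n) :
    Real.log (p (n + 1)) - Real.log (p n) <
      Real.log (1 + (Real.sqrt 6 * π / 6) / ((n : ℝ) + 1) ^ ((1:ℝ)/2)) := by
  have hpos (k : ℕ) : (0 : ℝ) < partitionCount k := mod_cast Fintype.card_pos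
  have hsucc : (partitionCount (n + 1) : ℝ) < partitionCount n * (1 + √6 * π / 6 / √(n + 1)) :=
    (lt_or_ge n 1000).elim (partitionCount_succ_lt_of_lt hn) partitionCount_succ_lt_of_le
  rw [hp, hp, ← sqrt_eq_rpow, ← log_div (hpos _).ne' (hpos _).ne']
  exact log_lt_log (div_pos (hpos _) (hpos _)) ((div_lt_iff₀' (hpos _)).mpr hsucc)
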